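/- Let m ≥ 2 and λ = (m−2)/2. For all x, y ∈ ℝ^m∖{0} and all r > 0: ∫_{S^{m−1}} conj(K_−(rη, x)) K_−(y, rη) dω(η) = 2^λ Γ(λ+1) u^{−λ} J_λ(u), where u = r √(|x|² + |y|² − 2⟨x,y⟩) = r|x−y|, dω is the rotation-invariant probability measure on the unit sphere S^{m−1}, conj denotes complex conjugation of the Cl_{0,m}⊗ℂ coefficients, and the product is taken in Cl_{0,m}⊗ℂ. -/

import Mathlib

open scoped BigOperators
open MeasureTheory

noncomputable section

namespace CliffordFourier

/-- Concrete model of the complexified Clifford algebra `Cl_{0,m} ⊗ ℂ`: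
an element is the family of its complex coefficients on the canonical basis
`e_S = e_{i₁} ⋯ e_{i_k}` (for `S = {i₁ < … < i_k} ⊆ {0,…,m-1}`). -/
def Cl (m : ℕ) : Type := Finset (Fin m) → ℂ

variable {m : ℕ}

instance : NormedAddCommGroup (Cl m) :=
  inferInstanceAs (NormedAddCommGroup (Finset (Fin m) → ℂ))
instance : NormedSpace ℝ (Cl m) :=
  inferInstanceAs (NormedSpace ℝ (Finset (Fin m) → ℂ))
instance : Module ℂ (Cl m) := inferInstanceAs (Module ℂ (Finset (Fin m) → ℂ))
instance : CompleteSpace (Cl m) := inferInstanceAs (CompleteSpace (Finset (Fin m) → ℂ))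

/-- The coefficient of `a` on the basis element `e_S`. -/
def coeff (a : Cl m) : Finset (Fin m) → ℂ := a

/-- Build an element of the Clifford algebra from its coefficients. -/
def ofCoeff (f : Finset (Fin m) → ℂ) : Cl m := f

/-- `1 = e_∅`. -/
instance : One (Cl m) := ⟨ofCoeff fun S => if S = (∅ : Finset (Fin m)) then 1 else 0⟩

/-- Clifford multiplication, determined by the relations `e_i e_j = - e_j e_i` (`i ≠ j`)
and `e_i² = -1`; on basis elements it is given by
`e_T · e_U = (-1)^{#{(t,u) ∈ T×U : u < t}} · (-1)^{#(T∩U)} · e_{T Δ U}`. -/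
instance : Mul (Cl m) :=
  ⟨fun a b => ofCoeff fun S => ∑ T : Finset (Fin m),
    ((-1 : ℂ) ^ ((((T ×ˢ (symmDiff T S)).filter fun p : Fin m × Fin m => p.2 < p.1).card)
        + (T ∩ (symmDiff T S)).card))
      * coeff a T * coeff b (symmDiff T S)⟩

/-- The generator `e_i`. -/
def e (m : ℕ) (i : Fin m) : Cl m := ofCoeff fun S => if S = {i} then 1 else 0

/-- The embedding of a vector `x ∈ ℝ^m` as `x = Σ_i x_i e_i` in the Clifford algebra. -/
def vec (m : ℕ) (x : Fin m → ℝ) : Cl m := ∑ i : Fin m, (x i : ℂ) • e m i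

/-- The Euclidean inner product `⟨x,y⟩ = Σ_i x_i y_i`. -/
def ip (x y : Fin m → ℝ) : ℝ := ∑ i, x i * y i

/-- The Euclidean norm `|x|`. -/
def nrm (x : Fin m → ℝ) : ℝ := Real.sqrt (ip x x)

/-- The wedge product `x∧y = Σ_{j<k} e_j e_k (x_j y_k - x_k y_j)`. -/
def wedge (m : ℕ) (x y : Fin m → ℝ) : Cl m :=
  ∑ j : Fin m, ∑ k : Fin m,
    if j < k then ((x j * y k - x k * y j : ℝ) : ℂ) • (e m j * e m k) else 0

/-- Complex conjugation of the coefficients. -/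
def cconj (a : Cl m) : Cl m := ofCoeff fun S => starRingEnd ℂ (coeff a S)

/-- The Gegenbauer polynomial `C_k^λ(w)`, defined through the standard three-term
recurrence, equivalent to the generating function `(1-2wt+t²)^{-λ} = Σ_k C_k^λ(w) t^k`. -/
def geg (lam : ℝ) : ℕ → ℝ → ℝ
  | 0, _ => 1
  | 1, w => 2 * lam * w
  | (k+2), w => (2 * ((k : ℝ) + 1 + lam) * w * geg lam (k+1) w
      - ((k : ℝ) + 2 * lam) * geg lam k w) / ((k : ℝ) + 2)

/-- The Bessel function of the first kind
`J_a(z) = Σ_{j≥0} (-1)^j (z/2)^{2j+a} / (j! Γ(j+a+1))`. -/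
def besselJ (a z : ℝ) : ℝ :=
  ∑' j : ℕ, ((-1 : ℝ)^j * (z/2) ^ (2*(j:ℝ) + a)) / (j.factorial * Real.Gamma ((j : ℝ) + a + 1))

/-- The entire function `J̃_a(t) = t^{-a} J_a(t) = Σ_{j≥0} (-1)^j (t/2)^{2j} / (j! Γ(j+a+1) 2^a)`
(for `t > 0` this is literally `t^{-a} J_a(t)`). -/
def besselJt (a t : ℝ) : ℝ :=
  ∑' j : ℕ, ((-1 : ℝ)^j * (t/2) ^ (2*j)) / (j.factorial * Real.Gamma ((j : ℝ) + a + 1) * (2:ℝ)^a)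

/-- The renormalized Gegenbauer polynomial `((k+λ)/λ) C_k^λ = C_k^{λ+1} - C_{k-2}^{λ+1}`
(the right-hand side also makes sense for `λ = 0`, i.e. `m = 2`). -/
def gegT (lam : ℝ) (k : ℕ) (w : ℝ) : ℝ :=
  geg (lam + 1) k w - (if 2 ≤ k then geg (lam + 1) (k - 2) w else 0)

/-- `A_λ(w,z) = 2^{λ-1} Γ(λ+1) Σ_{k≥0} (u + (-1)^k) z^{-λ} J_{k+λ}(z) C_k^λ(w)`, where `u = i^m`;
here written using `z^{-λ} J_{k+λ}(z) = z^k J̃_{k+λ}(z)`, which makes the formula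
well defined for all `z ≥ 0` (and all `m ≥ 2`). -/
def AfunR (u : ℂ) (lam w z : ℝ) : ℂ :=
  (((2:ℝ)^(lam - 1) * Real.Gamma (lam + 1) : ℝ) : ℂ) *
    ∑' k : ℕ, (u + (-1 : ℂ)^k) * ((z^k * besselJt ((k : ℝ) + lam) z * geg lam k w : ℝ) : ℂ)

/-- `B_λ(w,z) = -2^{λ-1} Γ(λ) Σ_{k≥0} (k+λ)(u - (-1)^k) z^{-λ} J_{k+λ}(z) C_k^λ(w)`;
here written using `Γ(λ)(k+λ)C_k^λ = Γ(λ+1)(C_k^{λ+1} - C_{k-2}^{λ+1})` and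
`z^{-λ} J_{k+λ}(z) = z^k J̃_{k+λ}(z)`, which makes the formula well defined
for all `z ≥ 0` and all `m ≥ 2` (including `λ = 0`). -/
def BfunR (u : ℂ) (lam w z : ℝ) : ℂ :=
  -(((2:ℝ)^(lam - 1) * Real.Gamma (lam + 1) : ℝ) : ℂ) *
    ∑' k : ℕ, (u - (-1 : ℂ)^k) * ((z^k * besselJt ((k : ℝ) + lam) z * gegT lam k w : ℝ) : ℂ)

/-- `C_λ(w,z) = -2^{λ-1} Γ(λ) Σ_{k≥0} (u + (-1)^k) z^{-λ-1} J_{k+λ}(z) (C_k^λ)'(w)`;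
here written using `Γ(λ) (C_k^λ)' = 2 Γ(λ+1) C_{k-1}^{λ+1}` and
`z^{-λ-1} J_{k+λ}(z) = z^{k-1} J̃_{k+λ}(z)`, which makes the formula well defined
for all `z ≥ 0` and all `m ≥ 2` (including `λ = 0`). -/
def CfunR (u : ℂ) (lam w z : ℝ) : ℂ :=
  -(((2:ℝ)^lam * Real.Gamma (lam + 1) : ℝ) : ℂ) *
    ∑' k : ℕ, (u + (-1 : ℂ)^k) *
      ((z^(k - 1) * besselJt ((k : ℝ) + lam) z
        * (if 1 ≤ k then geg (lam + 1) (k - 1) w else 0) : ℝ) : ℂ)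

/-- The Clifford-Fourier kernel
`K_-(x,y) = A_λ(w,z) + B_λ(w,z) + (x∧y) C_λ(w,z)`
with `λ = (m-2)/2`, `z = |x||y|`, `w = ⟨x,y⟩/(|x||y|)`. -/
def Kminus (m : ℕ) (x y : Fin m → ℝ) : Cl m :=
  (AfunR (Complex.I ^ m) (((m:ℝ) - 2)/2) (ip x y / (nrm x * nrm y)) (nrm x * nrm y)
    + BfunR (Complex.I ^ m) (((m:ℝ) - 2)/2) (ip x y / (nrm x * nrm y)) (nrm x * nrm y)) • (1 : Cl m)
  + CfunR (Complex.I ^ m) (((m:ℝ) - 2)/2) (ip x y / (nrm x * nrm y)) (nrm x * nrm y) • wedge m x y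

/-!
Write `C_k` for `gegT lam k`, that is `(k + λ) / λ` times the Gegenbauer polynomial `C_k^λ`, and
`D_k` for `C_{k-1}^{λ+1}`. The kernel is a Bessel-weighted sum over `k` of spherical harmonics
`a_k C_k(⟪x, η⟫) - (u + (-1)^k) D_k(⟪x, η⟫) (η ∧ x)` with `u = i^m`. Harmonics of different degrees
are orthogonal, and `C_k` reproduces: the mean of `C_k(⟪x, η⟫) C_k(⟪y, η⟫)` is `C_k(⟪x, y⟫)`. This
follows from Gegenbauer's differential equation by integration by parts along rotations. Rotating
`y` turns the reproducing formula into one for `C_k(⟪x, η⟫) D_k(⟪y, η⟫) (η ∧ y)`, and integrating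
the spherical Dirac operator to zero gives the one for
`D_k(⟪x, η⟫) D_k(⟪y, η⟫) (η ∧ x) (y ∧ η)`. Because `conj (i^m) * i^m = 1`, in the product of the
two kernels the bivector parts cancel and the scalar part in degree `k` collapses to
`C_k(⟪x, y⟫)`. What is left is the right-hand side of the addition theorem for Bessel functions,
which comes from expanding `exp (i ⟪r x - r y, η⟫)` into plane waves.
-/

/-! ### Gegenbauer polynomials -/

section Gegenbauer

theorem geg_recurrence (lam : ℝ) (k : ℕ) (w : ℝ) :
    (k + 2) * geg lam (k + 2) w =
      2 * (k + 1 + lam) * w * geg lam (k + 1) w - (k + 2 * lam) * geg lam k w := by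
  rw [geg]
  field_simp

theorem contDiff_geg (lam : ℝ) {n : WithTop ℕ∞} : ∀ k : ℕ, ContDiff ℝ n (geg lam k)
  | 0 => by
    rw [show geg lam 0 = fun _ => 1 from funext fun _ => geg.eq_1 _ _]
    exact contDiff_const
  | 1 => by
    rw [show geg lam 1 = fun w => 2 * lam * w from funext fun _ => geg.eq_2 _ _]
    fun_prop
  | k + 2 => by
    have := contDiff_geg lam (n := n) (k + 1)
    have := contDiff_geg lam (n := n) k
    rw [show geg lam (k + 2) = _ from funext fun w => geg.eq_3 lam w k]
    fun_prop

theorem differentiable_geg (lam : ℝ) (k : ℕ) : Differentiable ℝ (geg lam k) :=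
  (contDiff_geg lam k).differentiable one_ne_zero

theorem deriv_geg_zero (lam w : ℝ) : deriv (geg lam 0) w = 0 := by
  rw [show geg lam 0 = fun _ => 1 from funext fun _ => geg.eq_1 _ _, deriv_const]

theorem deriv_geg_one (lam w : ℝ) : deriv (geg lam 1) w = 2 * lam := by
  rw [show geg lam 1 = fun w => 2 * lam * w from funext fun _ => geg.eq_2 _ _]
  simp

theorem deriv_geg_recurrence (lam : ℝ) (k : ℕ) (w : ℝ) :
    (k + 2) * deriv (geg lam (k + 2)) w =
      2 * (k + 1 + lam) * (geg lam (k + 1) w + w * deriv (geg lam (k + 1)) w)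
        - (k + 2 * lam) * deriv (geg lam k) w := by
  have hlhs := ((differentiable_geg lam (k + 2)) w).hasDerivAt.const_mul ((k : ℝ) + 2)
  have hrhs := (((hasDerivAt_id w).const_mul (2 * (k + 1 + lam))).mul
    (differentiable_geg lam (k + 1) w).hasDerivAt).sub
    ((differentiable_geg lam k w).hasDerivAt.const_mul (k + 2 * lam))
  rw [show (fun w => ((k : ℝ) + 2) * geg lam (k + 2) w) = _ from
    funext (geg_recurrence lam k)] at hlhs
  rw [hlhs.unique hrhs]
  simp only [id_eq]
  ring

theorem mul_deriv_geg_and_deriv_geg_succ (lam w : ℝ) (k : ℕ) :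
    w * deriv (geg lam (k + 1)) w - deriv (geg lam k) w = (k + 1) * geg lam (k + 1) w ∧
      deriv (geg lam (k + 1)) w = w * deriv (geg lam k) w + (k + 2 * lam) * geg lam k w := by
  induction k with
  | zero =>
    simp only [zero_add, deriv_geg_zero, deriv_geg_one]
    simp only [geg]
    constructor <;> push_cast <;> ring
  | succ k ih =>
    obtain ⟨hmul, hsucc⟩ := ih
    have hsucc' : deriv (geg lam (k + 2)) w
        = w * deriv (geg lam (k + 1)) w + (k + 1 + 2 * lam) * geg lam (k + 1) w := by
      have hk : (k : ℝ) + 2 ≠ 0 := by positivity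
      apply mul_left_cancel₀ hk
      linear_combination deriv_geg_recurrence lam k w + (k + 2 * lam) * hmul
    push_cast
    refine ⟨?_, hsucc'⟩
    linear_combination w * hsucc' + w * hmul - hsucc - geg_recurrence lam k w

theorem mul_deriv_geg_succ_sub_deriv_geg (lam w : ℝ) (k : ℕ) :
    w * deriv (geg lam (k + 1)) w - deriv (geg lam k) w = (k + 1) * geg lam (k + 1) w :=
  (mul_deriv_geg_and_deriv_geg_succ lam w k).1

theorem deriv_geg_succ (lam w : ℝ) (k : ℕ) :
    deriv (geg lam (k + 1)) w = w * deriv (geg lam k) w + (k + 2 * lam) * geg lam k w :=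
  (mul_deriv_geg_and_deriv_geg_succ lam w k).2

theorem deriv_geg_add_two_sub_deriv_geg (lam w : ℝ) (k : ℕ) :
    deriv (geg lam (k + 2)) w - deriv (geg lam k) w = 2 * (k + 1 + lam) * geg lam (k + 1) w := by
  have hsucc := deriv_geg_succ lam w (k + 1)
  push_cast at hsucc
  linear_combination hsucc + mul_deriv_geg_succ_sub_deriv_geg lam w k

/-- `C_{k-1}^{λ+1}`, read as `0` for `k = 0`. Up to the factor `2λ` it is the derivative of
`C_k^λ`; the index is that of the spherical harmonics in which it occurs. -/
def gegD (lam : ℝ) (k : ℕ) (w : ℝ) : ℝ := if 1 ≤ k then geg (lam + 1) (k - 1) w else 0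

@[simp]
theorem gegD_zero (lam w : ℝ) : gegD lam 0 w = 0 := by simp [gegD]

@[simp]
theorem gegD_succ (lam w : ℝ) (k : ℕ) : gegD lam (k + 1) w = geg (lam + 1) k w := by simp [gegD]

theorem gegD_one (lam w : ℝ) : gegD lam 1 w = 1 := by simp [geg]

theorem contDiff_gegD (lam : ℝ) {n : WithTop ℕ∞} (k : ℕ) : ContDiff ℝ n (gegD lam k) := by
  unfold gegD
  split_ifs
  · exact contDiff_geg (lam + 1) (k - 1)
  · exact contDiff_const

@[fun_prop]
theorem continuous_gegD (lam : ℝ) (k : ℕ) : Continuous (gegD lam k) :=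
  (contDiff_gegD lam (n := 0) k).continuous

theorem gegT_zero (lam w : ℝ) : gegT lam 0 w = 1 := by simp [gegT, geg]

theorem gegT_eq_gegD_sub_gegD (lam : ℝ) (k : ℕ) (w : ℝ) :
    gegT lam k w = gegD lam (k + 1) w - gegD lam (k - 1) w := by
  rcases k with _ | _ | k <;> simp [gegT]

theorem gegD_succ_eq_gegT_add (lam w : ℝ) (k : ℕ) :
    gegD lam (k + 1) w = gegT lam k w + gegD lam (k - 1) w := by
  rw [gegT_eq_gegD_sub_gegD, sub_add_cancel]

theorem contDiff_gegT (lam : ℝ) {n : WithTop ℕ∞} (k : ℕ) : ContDiff ℝ n (gegT lam k) := by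
  rw [funext (gegT_eq_gegD_sub_gegD lam k)]
  exact (contDiff_gegD lam _).sub (contDiff_gegD lam _)

@[fun_prop]
theorem continuous_gegT (lam : ℝ) (k : ℕ) : Continuous (gegT lam k) :=
  (contDiff_gegT lam (n := 0) k).continuous

theorem deriv_gegT (lam : ℝ) (k : ℕ) :
    deriv (gegT lam k) = fun w => 2 * (k + lam) * gegD lam k w := by
  funext w
  have hdiff := fun j => (contDiff_gegD lam j).differentiable (n := 1) one_ne_zero w
  rw [funext (gegT_eq_gegD_sub_gegD lam k), deriv_fun_sub (hdiff _) (hdiff _)]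
  rcases k with _ | _ | k
  · simp [funext (gegD_zero lam), funext (gegD_succ lam · 0), deriv_geg_zero]
  · simp [funext (gegD_zero lam), funext (gegD_succ lam · 1), geg, add_comm]
  · simp only [funext (gegD_succ lam · (k + 2)), Nat.add_sub_cancel, funext (gegD_succ lam · k),
      gegD_succ]
    rw [deriv_geg_add_two_sub_deriv_geg]
    push_cast
    ring

theorem gegD_recurrence (lam w : ℝ) (k : ℕ) :
    k * gegD lam (k + 1) w =
      2 * (k + lam) * w * gegD lam k w - (k + 2 * lam) * gegD lam (k - 1) w := by
  rcases k with _ | _ | k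
  · simp
  · simp only [zero_add, Nat.sub_self, gegD_zero, gegD_succ, geg]
    push_cast
    ring
  · have hrec := geg_recurrence (lam + 1) k w
    simp only [gegD_succ, Nat.add_sub_cancel]
    push_cast
    linear_combination hrec

theorem two_mul_mul_gegD (lam w : ℝ) (k : ℕ) :
    2 * (k + lam) * (w * gegD lam k w) = k * gegT lam k w + 2 * (k + lam) * gegD lam (k - 1) w := by
  linear_combination -(gegD_recurrence lam w k) - k * gegT_eq_gegD_sub_gegD lam k w

theorem gegenbauer_differential_equation (lam w : ℝ) (k : ℕ) :
    2 * (k + lam) * ((1 - w ^ 2) * deriv (gegD lam k) w - (2 * lam + 1) * w * gegD lam k w) =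
      -(k * (k + 2 * lam)) * gegT lam k w := by
  rcases k with _ | k
  · simp [funext (gegD_zero lam)]
  · have hmul := mul_deriv_geg_succ_sub_deriv_geg (lam + 1) w k
    have hsucc := deriv_geg_succ (lam + 1) w k
    have hwD := two_mul_mul_gegD lam w (k + 1)
    have hD := gegD_succ_eq_gegT_add lam w (k + 1)
    simp only [funext (gegD_succ lam · k), Nat.add_sub_cancel, gegD_succ] at hwD hD ⊢
    push_cast at hwD ⊢
    linear_combination 2 * (k + 1 + lam) * (w * hsucc - hmul - (k + 1) * hD) + (k + 1) * hwD

theorem deriv_geg (lam w : ℝ) : ∀ k : ℕ, deriv (geg lam k) w = 2 * lam * gegD lam k w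
  | 0 => by rw [deriv_geg_zero, gegD_zero, mul_zero]
  | 1 => by rw [deriv_geg_one, gegD_one, mul_one]
  | k + 2 => by
    have hk : (k : ℝ) + 1 ≠ 0 := by positivity
    have hD := gegD_recurrence lam w (k + 1)
    have hsucc := deriv_geg_succ lam w (k + 1)
    have hsub := deriv_geg_add_two_sub_deriv_geg lam w k
    rw [deriv_geg lam w k] at hsub
    rw [deriv_geg lam w (k + 1)] at hsucc
    rw [Nat.add_sub_cancel] at hD
    push_cast at hD hsucc
    apply mul_left_cancel₀ hk
    linear_combination 2 * (k + 1 + lam) * hsucc - (k + 1 + 2 * lam) * hsub - 2 * lam * hD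

theorem add_mul_geg (lam w : ℝ) (k : ℕ) : (k + lam) * geg lam k w = lam * gegT lam k w := by
  rcases k with _ | k
  · simp [geg, gegT_zero]
  · have hsub : deriv (geg lam (k + 2)) w - deriv (geg lam k) w = _ :=
      deriv_geg_add_two_sub_deriv_geg lam w k
    rw [deriv_geg, deriv_geg] at hsub
    rw [gegT_eq_gegD_sub_gegD, Nat.add_sub_cancel]
    push_cast
    linear_combination -hsub / 2

theorem abs_geg_le {lam : ℝ} (hlam : 0 ≤ lam) {w : ℝ} (hw : |w| ≤ 1) :
    ∀ k : ℕ, |geg lam k w| ≤ (4 * (1 + lam)) ^ k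
  | 0 => by simp [geg]
  | 1 => by
    rw [geg, abs_mul, abs_of_nonneg (by positivity : 0 ≤ 2 * lam)]
    nlinarith [abs_nonneg w]
  | k + 2 => by
    have hk : (0 : ℝ) ≤ k := k.cast_nonneg
    rw [geg, abs_div, abs_of_pos (by positivity : (0 : ℝ) < k + 2), div_le_iff₀ (by positivity)]
    have hC₁ : |2 * ((k : ℝ) + 1 + lam) * w * geg lam (k + 1) w|
        ≤ 2 * (k + 1 + lam) * 1 * (4 * (1 + lam)) ^ (k + 1) := by
      rw [abs_mul, abs_mul, abs_of_nonneg (by positivity : 0 ≤ 2 * ((k : ℝ) + 1 + lam))]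
      gcongr
      exact abs_geg_le hlam hw (k + 1)
    have hC₀ : |((k : ℝ) + 2 * lam) * geg lam k w| ≤ (k + 2 * lam) * (4 * (1 + lam)) ^ k := by
      rw [abs_mul, abs_of_nonneg (by positivity : 0 ≤ (k : ℝ) + 2 * lam)]
      gcongr
      exact abs_geg_le hlam hw k
    have hrate : 2 * (k + 1 + lam) * 1 * (4 * (1 + lam)) + (k + 2 * lam)
        ≤ (4 * (1 + lam)) ^ 2 * (k + 2) := by
      nlinarith [mul_nonneg hk hlam, mul_nonneg (mul_nonneg hk hlam) hlam]
    calc _ ≤ _ := (abs_sub _ _).trans (add_le_add hC₁ hC₀)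
      _ = (4 * (1 + lam)) ^ k * (2 * (k + 1 + lam) * 1 * (4 * (1 + lam)) + (k + 2 * lam)) := by ring
      _ ≤ (4 * (1 + lam)) ^ k * ((4 * (1 + lam)) ^ 2 * (k + 2)) := by gcongr
      _ = _ := by ring

theorem abs_gegD_le {lam : ℝ} (hlam : 0 ≤ lam) {w : ℝ} (hw : |w| ≤ 1) (k : ℕ) :
    |gegD lam k w| ≤ (4 * (2 + lam)) ^ k := by
  rcases k with _ | k
  · simp
  · calc |gegD lam (k + 1) w| ≤ (4 * (1 + (lam + 1))) ^ k := by
          simpa using abs_geg_le (by positivity : 0 ≤ lam + 1) hw k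
      _ = (4 * (2 + lam)) ^ k := by ring
      _ ≤ (4 * (2 + lam)) ^ (k + 1) := pow_le_pow_right₀ (by linarith) k.le_succ

theorem abs_gegT_le {lam : ℝ} (hlam : 0 ≤ lam) {w : ℝ} (hw : |w| ≤ 1) (k : ℕ) :
    |gegT lam k w| ≤ 2 * (4 * (2 + lam)) ^ (k + 1) := by
  have hpow : (4 * (2 + lam)) ^ (k - 1) ≤ (4 * (2 + lam)) ^ (k + 1) :=
    pow_le_pow_right₀ (by linarith) (by omega)
  rw [gegT_eq_gegD_sub_gegD]
  linarith [abs_sub (gegD lam (k + 1) w) (gegD lam (k - 1) w), abs_gegD_le hlam hw (k + 1),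
    abs_gegD_le hlam hw (k - 1)]

end Gegenbauer

/-- The off-diagonal coefficient of the Jacobi matrix of `gegT lam`. For `k = lam = 0` the
convention `0 / 0 = 0` gives the value that `mul_gegT` needs. -/
def jacobiCoeff (lam : ℝ) (k : ℕ) : ℝ := k / (2 * (k + lam))

theorem jacobiCoeff_zero (lam : ℝ) : jacobiCoeff lam 0 = 0 := by simp [jacobiCoeff]

theorem two_mul_mul_jacobiCoeff {lam : ℝ} (hlam : 0 ≤ lam) (k : ℕ) :
    2 * (k + lam) * jacobiCoeff lam k = k := by
  rcases k with _ | k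
  · simp [jacobiCoeff_zero]
  · have hk : ((k + 1 : ℕ) : ℝ) + lam ≠ 0 := by positivity
    rw [jacobiCoeff]
    field_simp

theorem mul_gegD {lam : ℝ} (hlam : 0 ≤ lam) (w : ℝ) (k : ℕ) :
    w * gegD lam k w = jacobiCoeff lam k * gegT lam k w + gegD lam (k - 1) w := by
  rcases k with _ | k
  · simp [jacobiCoeff_zero]
  · have hk : 2 * (((k + 1 : ℕ) : ℝ) + lam) ≠ 0 := by positivity
    refine mul_left_cancel₀ hk ?_
    linear_combination two_mul_mul_gegD lam w (k + 1)
      - gegT lam (k + 1) w * two_mul_mul_jacobiCoeff hlam (k + 1)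

theorem mul_gegT {lam : ℝ} (hlam : 0 ≤ lam) (w : ℝ) (k : ℕ) :
    w * gegT lam k w = jacobiCoeff lam (k + 1) * gegT lam (k + 1) w
      + if k = 0 then 0 else (1 - jacobiCoeff lam (k - 1)) * gegT lam (k - 1) w := by
  have hsucc := mul_gegD hlam w (k + 1)
  have hD := gegD_succ_eq_gegT_add lam w k
  rcases k with _ | k
  · simp_all
  · have hpred := mul_gegD hlam w k
    have hDpred := gegD_succ_eq_gegT_add lam w k
    simp only [Nat.add_sub_cancel, Nat.add_eq_zero_iff, one_ne_zero, and_false, if_false]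
      at hsucc hD hDpred ⊢
    linear_combination hsucc - hpred - w * hD + hDpred

theorem geg_eq_mul_gegT {lam : ℝ} (hlam : 0 ≤ lam) (w : ℝ) (k : ℕ) :
    geg lam k w = (1 - 2 * jacobiCoeff lam k) * gegT lam k w := by
  rcases k with _ | k
  · simp [jacobiCoeff_zero, geg, gegT_zero]
  · have hk : ((k + 1 : ℕ) : ℝ) + lam ≠ 0 := by positivity
    refine mul_left_cancel₀ hk ?_
    linear_combination add_mul_geg lam w (k + 1)
      + gegT lam (k + 1) w * two_mul_mul_jacobiCoeff hlam (k + 1)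

theorem gegD_differential_equation {lam : ℝ} (hlam : 0 ≤ lam) (w : ℝ) (k : ℕ) :
    (1 - w ^ 2) * deriv (gegD lam k) w - (2 * lam + 1) * w * gegD lam k w =
      -(2 * (k + lam) * (jacobiCoeff lam k * (1 - jacobiCoeff lam k))) * gegT lam k w := by
  rcases k with _ | k
  · simp [jacobiCoeff_zero, show gegD lam 0 = 0 from funext (gegD_zero lam)]
  · have hk : 2 * (((k + 1 : ℕ) : ℝ) + lam) ≠ 0 := by positivity
    refine mul_left_cancel₀ hk ?_
    rw [gegenbauer_differential_equation]
    linear_combination gegT lam (k + 1) w * (2 * (((k + 1 : ℕ) : ℝ) + lam)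
      * (1 - jacobiCoeff lam (k + 1)) - ((k + 1 : ℕ) : ℝ)) * two_mul_mul_jacobiCoeff hlam (k + 1)

/-! ### Rotation invariance and integration by parts on the sphere -/

section Sphere

open Metric Set
open scoped RealInnerProductSpace Pointwise

variable {E : Type*} [NormedAddCommGroup E] [InnerProductSpace ℝ E]

/-- The homeomorphism of the unit sphere induced by a linear isometry. -/
def sphereHomeomorph (R : E ≃ₗᵢ[ℝ] E) : sphere (0 : E) 1 ≃ₜ sphere (0 : E) 1 :=
  R.toHomeomorph.subtype fun η => by simp

@[simp]
theorem coe_sphereHomeomorph (R : E ≃ₗᵢ[ℝ] E) (η : sphere (0 : E) 1) :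
    (sphereHomeomorph R η : E) = R η :=
  rfl

theorem smul_image_coe_preimage_sphereHomeomorph (R : E ≃ₗᵢ[ℝ] E) (s : Set (sphere (0 : E) 1))
    (I : Set ℝ) :
    I • ((↑) '' (sphereHomeomorph R ⁻¹' s) : Set E) = R ⁻¹' (I • ((↑) '' s : Set E)) := by
  ext v
  simp only [mem_smul, mem_image, mem_preimage]
  constructor
  · rintro ⟨t, ht, _, ⟨η, hη, rfl⟩, rfl⟩
    exact ⟨t, ht, _, ⟨sphereHomeomorph R η, hη, rfl⟩, by simp⟩
  · rintro ⟨t, ht, _, ⟨η, hη, rfl⟩, hv⟩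
    refine ⟨t, ht, _, ⟨(sphereHomeomorph R).symm η, by simpa using hη, rfl⟩, R.injective ?_⟩
    rw [map_smul, ← coe_sphereHomeomorph, Homeomorph.apply_symm_apply, hv]

/-- The generator `η ↦ ⟪u, η⟫ v - ⟪v, η⟫ u` of the rotations in the plane spanned by `u` and
`v`. -/
def rotationGenerator (u v : E) : E →L[ℝ] E :=
  InnerProductSpace.rankOne ℝ v u - InnerProductSpace.rankOne ℝ u v

@[simp]
theorem rotationGenerator_apply (u v η : E) :
    rotationGenerator u v η = ⟪u, η⟫ • v - ⟪v, η⟫ • u := by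
  simp [rotationGenerator]

theorem sum_inner_smul_rotationGenerator {ι : Type*} [Fintype ι] (b : OrthonormalBasis ι ℝ E)
    (x η : E) :
    ∑ i, ⟪b i, η⟫ • rotationGenerator x (b i) η = ⟪x, η⟫ • η - ⟪η, η⟫ • x := by
  have hη : ∑ i, ⟪b i, η⟫ • b i = η := b.sum_repr' η
  have hη_sq : ∑ i, ⟪b i, η⟫ * ⟪b i, η⟫ = ⟪η, η⟫ := by
    simpa only [real_inner_comm] using b.sum_inner_mul_inner η η
  calc ∑ i, ⟪b i, η⟫ • rotationGenerator x (b i) η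
      = ⟪x, η⟫ • ∑ i, ⟪b i, η⟫ • b i - (∑ i, ⟪b i, η⟫ * ⟪b i, η⟫) • x := by
        simp only [rotationGenerator_apply, smul_sub, Finset.sum_sub_distrib, Finset.smul_sum,
          Finset.sum_smul, smul_smul, mul_comm ⟪x, η⟫]
    _ = ⟪x, η⟫ • η - ⟪η, η⟫ • x := by rw [hη, hη_sq]

variable [FiniteDimensional ℝ E]

theorem rotationGenerator_mem_skewAdjoint (u v : E) :
    rotationGenerator u v ∈ skewAdjoint (E →L[ℝ] E) := by
  rw [skewAdjoint.mem_iff, rotationGenerator, star_sub, ContinuousLinearMap.star_eq_adjoint,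
    ContinuousLinearMap.star_eq_adjoint, InnerProductSpace.adjoint_rankOne,
    InnerProductSpace.adjoint_rankOne, neg_sub]

theorem continuous_exp_smul_apply (A : E →L[ℝ] E) :
    Continuous fun p : ℝ × E => NormedSpace.exp (p.1 • A) p.2 := by
  have hexp : Continuous fun t : ℝ => NormedSpace.exp (t • A) :=
    continuous_iff_continuousAt.2 fun t => (hasDerivAt_exp_smul_const A t).continuousAt
  exact (hexp.comp continuous_fst).clm_apply continuous_snd

theorem exists_linearIsometryEquiv_eq_exp_smul {A : E →L[ℝ] E}
    (hA : A ∈ skewAdjoint (E →L[ℝ] E)) (t : ℝ) :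
    ∃ R : E ≃ₗᵢ[ℝ] E, ∀ v, R v = NormedSpace.exp (t • A) v := by
  let : NormedAlgebra ℚ (E →L[ℝ] E) := .restrictScalars ℚ ℝ _
  exact ⟨Unitary.linearIsometryEquiv ⟨_, NormedSpace.exp_mem_unitary_of_mem_skewAdjoint
    (skewAdjoint.smul_mem t hA)⟩, fun _ => rfl⟩

variable [MeasurableSpace E] [BorelSpace E]

variable (E) in
/-- The rotation-invariant probability measure on the unit sphere of `E`. -/
def sphereMeasure : Measure (sphere (0 : E) 1) :=
  ((volume : Measure E).toSphere univ)⁻¹ • (volume : Measure E).toSphere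

instance : IsFiniteMeasure (sphereMeasure E) :=
  ⟨(ENNReal.inv_mul_le_one _).trans_lt ENNReal.one_lt_top⟩

instance [Nontrivial E] : IsProbabilityMeasure (sphereMeasure E) := by
  refine ⟨ENNReal.inv_mul_cancel ?_ (measure_ne_top _ _)⟩
  rw [Ne, Measure.measure_univ_eq_zero]
  exact Measure.toSphere_ne_zero _

theorem measurePreserving_sphereHomeomorph (R : E ≃ₗᵢ[ℝ] E) :
    MeasurePreserving (sphereHomeomorph R) (sphereMeasure E) (sphereMeasure E) := by
  refine MeasurePreserving.smul_measure ⟨(sphereHomeomorph R).measurable, ?_⟩ _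
  ext s hs
  rw [Measure.map_apply (sphereHomeomorph R).measurable hs, Measure.toSphere_apply' _ hs,
    Measure.toSphere_apply' _ ((sphereHomeomorph R).measurable hs),
    smul_image_coe_preimage_sphereHomeomorph]
  congr 1
  exact R.measurePreserving.measure_preimage_equiv (f := R.toMeasurableEquiv) _

variable {V : Type*} [NormedAddCommGroup V]

theorem integrable_sphereMeasure {F : sphere (0 : E) 1 → V} (hF : Continuous F) :
    Integrable F (sphereMeasure E) :=
  hF.integrable_of_hasCompactSupport (.of_compactSpace F)

variable [NormedSpace ℝ V]

theorem integral_comp_linearIsometryEquiv (R : E ≃ₗᵢ[ℝ] E) (F : E → V) :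
    ∫ η : sphere (0 : E) 1, F (R η) ∂sphereMeasure E =
      ∫ η : sphere (0 : E) 1, F η ∂sphereMeasure E :=
  (measurePreserving_sphereHomeomorph R).integral_comp (sphereHomeomorph R).measurableEmbedding
    (F ·)

open NormedSpace in
theorem hasDerivAt_integral_comp_exp_smul (A : E →L[ℝ] E) {φ : sphere (0 : E) 1 → ℝ}
    (hφ : Continuous φ) {F : E → V} (hF : ContDiff ℝ 1 F) :
    HasDerivAt (fun t : ℝ => ∫ η, φ η • F (exp (t • A) η) ∂sphereMeasure E)
      (∫ η, φ η • fderiv ℝ F η (A η) ∂sphereMeasure E) 0 := by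
  have hderiv (t : ℝ) (η : sphere (0 : E) 1) : HasDerivAt (fun t : ℝ => φ η • F (exp (t • A) η))
      (φ η • fderiv ℝ F (exp (t • A) η) (exp (t • A) (A η))) t :=
    ((hF.differentiable one_ne_zero _).hasFDerivAt.comp_hasDerivAt t
      ((hasDerivAt_exp_smul_const A t).clm_apply (hasDerivAt_const t (η : E)))).const_smul (φ η)
      |>.congr_deriv (by simp)
  have hexp := continuous_exp_smul_apply A
  have hexp_sphere : Continuous fun p : ℝ × sphere (0 : E) 1 => exp (p.1 • A) (p.2 : E) :=
    hexp.comp (by fun_prop : Continuous fun p : ℝ × sphere (0 : E) 1 => (p.1, (p.2 : E)))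
  have hderiv_cont : Continuous fun p : ℝ × sphere (0 : E) 1 =>
      φ p.2 • fderiv ℝ F (exp (p.1 • A) p.2) (exp (p.1 • A) (A p.2)) := by
    refine (hφ.comp continuous_snd).smul (((hF.continuous_fderiv one_ne_zero).comp
      hexp_sphere).clm_apply (hexp.comp (?_ : Continuous fun p : ℝ × sphere (0 : E) 1 =>
        (p.1, A p.2))))
    fun_prop
  obtain ⟨C, hC⟩ := ((isCompact_closedBall (0 : ℝ) 1).prod
    isCompact_univ).exists_bound_of_continuousOn hderiv_cont.continuousOn
  have hF_int (t : ℝ) : Integrable (fun η => φ η • F (exp (t • A) η)) (sphereMeasure E) :=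
    integrable_sphereMeasure (hφ.smul (hF.continuous.comp (by fun_prop)))
  have hdom := (hasDerivAt_integral_of_dominated_loc_of_deriv_le (μ := sphereMeasure E)
    (bound := fun _ => C) (closedBall_mem_nhds (0 : ℝ) one_pos)
    (.of_forall fun t => (hF_int t).aestronglyMeasurable) (hF_int 0)
    (integrable_sphereMeasure
      (hderiv_cont.comp (Continuous.prodMk_right 0))).aestronglyMeasurable
    (.of_forall fun η t ht => hC (t, η) ⟨ht, mem_univ η⟩)
    (integrable_sphereMeasure continuous_const)
    (.of_forall fun η t _ => hderiv t η)).2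
  simpa using hdom

theorem integral_fderiv_apply_skewAdjoint {A : E →L[ℝ] E} (hA : A ∈ skewAdjoint (E →L[ℝ] E))
    {F : E → V} (hF : ContDiff ℝ 1 F) :
    ∫ η : sphere (0 : E) 1, fderiv ℝ F η (A η) ∂sphereMeasure E = 0 := by
  have hderiv := hasDerivAt_integral_comp_exp_smul A (φ := fun _ => 1) continuous_const hF
  have hconst (t : ℝ) :
      ∫ η : sphere (0 : E) 1, (1 : ℝ) • F (NormedSpace.exp (t • A) η) ∂sphereMeasure E =
        ∫ η : sphere (0 : E) 1, F η ∂sphereMeasure E := by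
    obtain ⟨R, hR⟩ := exists_linearIsometryEquiv_eq_exp_smul hA t
    simpa only [one_smul, hR] using integral_comp_linearIsometryEquiv R F
  rw [funext hconst] at hderiv
  simpa using hderiv.unique (hasDerivAt_const _ _)

theorem finrank_sub_one_smul_integral_inner_smul (x : E) {F : E → V} (hF : ContDiff ℝ 1 F) :
    ((Module.finrank ℝ E : ℝ) - 1) • ∫ η : sphere (0 : E) 1, ⟪x, η⟫ • F η ∂sphereMeasure E =
      ∫ η : sphere (0 : E) 1, fderiv ℝ F η (x - ⟪x, (η : E)⟫ • (η : E)) ∂sphereMeasure E := by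
  let b := stdOrthonormalBasis ℝ E
  have : Continuous (fderiv ℝ F) := hF.continuous_fderiv one_ne_zero
  have hFc := hF.continuous
  have hparts (i) : ∫ η : sphere (0 : E) 1, ((⟪x, (η : E)⟫ - ⟪(η : E), b i⟫ * ⟪b i, x⟫) • F η
      + fderiv ℝ F η (⟪b i, (η : E)⟫ • rotationGenerator x (b i) η)) ∂sphereMeasure E = 0 := by
    rw [← integral_fderiv_apply_skewAdjoint (rotationGenerator_mem_skewAdjoint x (b i))
      (F := fun η => ⟪b i, η⟫ • F η) ((contDiff_const.inner ℝ contDiff_id).smul hF)]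
    refine integral_congr_ae (.of_forall fun η => ?_)
    have hd : HasFDerivAt (fun η => ⟪b i, η⟫ • F η) _ (η : E) :=
      (innerSL ℝ (b i)).hasFDerivAt.smul (hF.differentiable one_ne_zero _).hasFDerivAt
    simp [hd.fderiv, inner_sub_right, inner_smul_right, real_inner_comm (b i) (η : E)]
    abel
  have hsum := Finset.sum_eq_zero fun i (_ : i ∈ Finset.univ) => hparts i
  rw [← integral_finsetSum _ fun i _ => integrable_sphereMeasure (by fun_prop)] at hsum
  rw [← sub_eq_zero, ← integral_smul, ← integral_sub (integrable_sphereMeasure (by fun_prop))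
    (integrable_sphereMeasure (by fun_prop)), ← hsum]
  refine integral_congr_ae (.of_forall fun η => ?_)
  have hηx : ∑ i, ⟪(η : E), b i⟫ * ⟪b i, x⟫ = ⟪x, (η : E)⟫ := by
    rw [b.sum_inner_mul_inner, real_inner_comm]
  beta_reduce
  rw [Finset.sum_add_distrib, ← Finset.sum_smul, Finset.sum_sub_distrib, hηx, ← map_sum,
    sum_inner_smul_rotationGenerator, ← neg_sub _ x]
  simp [sub_mul, smul_smul]
  abel

theorem integral_zonal_by_parts {f g : ℝ → ℝ} (hf : ContDiff ℝ 1 f) (hg : ContDiff ℝ 1 g)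
    {x : E} (hx : ‖x‖ = 1) (y : E) :
    ∫ η : sphere (0 : E) 1, ((1 - ⟪x, (η : E)⟫ ^ 2) * deriv f ⟪x, (η : E)⟫ -
        ((Module.finrank ℝ E : ℝ) - 1) * ⟪x, (η : E)⟫ * f ⟪x, (η : E)⟫) * g ⟪y, (η : E)⟫
          ∂sphereMeasure E =
      ∫ η : sphere (0 : E) 1, (⟪x, (η : E)⟫ * ⟪y, (η : E)⟫ - ⟪x, y⟫) *
        (f ⟪x, (η : E)⟫ * deriv g ⟪y, (η : E)⟫) ∂sphereMeasure E := by
  have hdiv := finrank_sub_one_smul_integral_inner_smul x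
    (F := fun η => f ⟪x, η⟫ * g ⟪y, η⟫)
    ((hf.comp (contDiff_const.inner ℝ contDiff_id)).mul
      (hg.comp (contDiff_const.inner ℝ contDiff_id)))
  have hfderiv (η : sphere (0 : E) 1) :
      fderiv ℝ (fun η => f ⟪x, η⟫ * g ⟪y, η⟫) η (x - ⟪x, (η : E)⟫ • (η : E)) =
        (1 - ⟪x, (η : E)⟫ ^ 2) * deriv f ⟪x, (η : E)⟫ * g ⟪y, (η : E)⟫ -
          (⟪x, (η : E)⟫ * ⟪y, (η : E)⟫ - ⟪x, y⟫) * (f ⟪x, (η : E)⟫ * deriv g ⟪y, (η : E)⟫) := by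
    have hd : HasFDerivAt (fun η => f ⟪x, η⟫ * g ⟪y, η⟫) _ (η : E) :=
      ((hf.differentiable one_ne_zero _).hasDerivAt.comp_hasFDerivAt _
        (innerSL ℝ x).hasFDerivAt).mul
      ((hg.differentiable one_ne_zero _).hasDerivAt.comp_hasFDerivAt _
        (innerSL ℝ y).hasFDerivAt)
    simp [hd.fderiv, inner_sub_right, inner_smul_right, hx, real_inner_comm x y]
    ring
  have := hf.continuous_deriv le_rfl
  have := hg.continuous_deriv le_rfl
  have hfc := hf.continuous
  have hgc := hg.continuous
  simp only [hfderiv] at hdiv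
  rw [integral_sub (integrable_sphereMeasure (by fun_prop))
    (integrable_sphereMeasure (by fun_prop)), smul_eq_mul, eq_sub_iff_add_eq, ← eq_sub_iff_add_eq',
    ← integral_const_mul, ← integral_sub (integrable_sphereMeasure (by fun_prop))
    (integrable_sphereMeasure (by fun_prop))] at hdiv
  rw [hdiv]
  exact integral_congr_ae (.of_forall fun η => by simp only [smul_eq_mul]; ring)

end Sphere

/-! ### Zonal orthogonality relations -/

section Zonal

open Metric
open scoped RealInnerProductSpace

variable {E : Type*} [NormedAddCommGroup E] [InnerProductSpace ℝ E] [FiniteDimensional ℝ E]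
  [MeasurableSpace E] [BorelSpace E]

/-- The spherical mean of the product of the zonal functions `f` about `x` and `g` about `y`. -/
def zonalPairing (f g : ℝ → ℝ) (x y : E) : ℝ :=
  ∫ η : sphere (0 : E) 1, f ⟪x, (η : E)⟫ * g ⟪y, (η : E)⟫ ∂sphereMeasure E

theorem zonalPairing_comm (f g : ℝ → ℝ) (x y : E) :
    zonalPairing f g x y = zonalPairing g f y x := by
  simp only [zonalPairing, mul_comm]

theorem zonalPairing_add_right {f g h : ℝ → ℝ} (hf : Continuous f) (hg : Continuous g)
    (hh : Continuous h) (x y : E) :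
    zonalPairing f (g + h) x y = zonalPairing f g x y + zonalPairing f h x y := by
  simp only [zonalPairing, Pi.add_apply, mul_add]
  exact integral_add (integrable_sphereMeasure (by fun_prop))
    (integrable_sphereMeasure (by fun_prop))

theorem zonalPairing_smul_right (f g : ℝ → ℝ) (c : ℝ) (x y : E) :
    zonalPairing f (c • g) x y = c * zonalPairing f g x y := by
  simp only [zonalPairing, Pi.smul_apply, smul_eq_mul, mul_left_comm _ c, integral_const_mul]

theorem zonalPairing_add_smul_of_orthogonal {f g : ℝ → ℝ} (hf : Continuous f) (hg : Continuous g)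
    {x y : E} (hfg : zonalPairing f g x y = 0) (hgf : zonalPairing f g y x = 0) (a b : ℝ) :
    zonalPairing (a • f + b • g) (a • f + b • g) x y =
      a ^ 2 * zonalPairing f f x y + b ^ 2 * zonalPairing g g x y := by
  have hexpand (h : ℝ → ℝ) (hh : Continuous h) (u v : E) :
      zonalPairing h (a • f + b • g) u v = a * zonalPairing h f u v + b * zonalPairing h g u v := by
    rw [zonalPairing_add_right hh (hf.const_smul a) (hg.const_smul b), zonalPairing_smul_right,
      zonalPairing_smul_right]
  rw [zonalPairing_comm] at hgf
  rw [hexpand _ (by fun_prop), zonalPairing_comm _ f, zonalPairing_comm _ g, hexpand f hf,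
    hexpand g hg, zonalPairing_comm f f y x, zonalPairing_comm f g y x, zonalPairing_comm g f y x,
    zonalPairing_comm g g y x, hfg, hgf]
  ring

variable {lam : ℝ} (hdim : 2 * lam + 2 = Module.finrank ℝ E)
include hdim

theorem mul_zonalPairing_gegT_gegT (k l : ℕ) {x : E} (hx : ‖x‖ = 1) (y : E) :
    -(k * (k + 2 * lam)) * zonalPairing (gegT lam k) (gegT lam l) x y =
      4 * (k + lam) * (l + lam) * ∫ η : sphere (0 : E) 1,
        (⟪x, (η : E)⟫ * ⟪y, (η : E)⟫ - ⟪x, y⟫) *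
          (gegD lam k ⟪x, (η : E)⟫ * gegD lam l ⟪y, (η : E)⟫) ∂sphereMeasure E := by
  have hparts := integral_zonal_by_parts (contDiff_gegD lam k) (contDiff_gegT lam l) hx y
  simp only [deriv_gegT, ← hdim, (by ring : 2 * lam + 2 - 1 = 2 * lam + 1)] at hparts
  calc -(k * (k + 2 * lam)) * zonalPairing (gegT lam k) (gegT lam l) x y
      = 2 * (k + lam) * ∫ η : sphere (0 : E) 1, ((1 - ⟪x, (η : E)⟫ ^ 2) *
          deriv (gegD lam k) ⟪x, (η : E)⟫ - (2 * lam + 1) * ⟪x, (η : E)⟫ *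
            gegD lam k ⟪x, (η : E)⟫) * gegT lam l ⟪y, (η : E)⟫ ∂sphereMeasure E := by
        rw [zonalPairing, ← integral_const_mul, ← integral_const_mul]
        exact integral_congr_ae (.of_forall fun η => by
          beta_reduce
          rw [← mul_assoc, ← gegenbauer_differential_equation, mul_assoc])
    _ = _ := by
        rw [hparts, ← integral_const_mul, ← integral_const_mul]
        exact integral_congr_ae (.of_forall fun η => by ring)

variable (hlam : 0 ≤ lam) {x y : E} (hx : ‖x‖ = 1) (hy : ‖y‖ = 1)
include hlam hx hy

theorem zonalPairing_gegT_gegT_of_ne {k l : ℕ} (hkl : k ≠ l) :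
    zonalPairing (gegT lam k) (gegT lam l) x y = 0 := by
  have hk := mul_zonalPairing_gegT_gegT hdim k l hx y
  have hl := mul_zonalPairing_gegT_gegT hdim l k hy x
  have hintegral : ∫ η : sphere (0 : E) 1, (⟪y, (η : E)⟫ * ⟪x, (η : E)⟫ - ⟪y, x⟫) *
        (gegD lam l ⟪y, (η : E)⟫ * gegD lam k ⟪x, (η : E)⟫) ∂sphereMeasure E =
      ∫ η : sphere (0 : E) 1, (⟪x, (η : E)⟫ * ⟪y, (η : E)⟫ - ⟪x, y⟫) *
        (gegD lam k ⟪x, (η : E)⟫ * gegD lam l ⟪y, (η : E)⟫) ∂sphereMeasure E :=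
    integral_congr_ae (.of_forall fun η => by simp only [real_inner_comm y x]; ring)
  rw [hintegral, zonalPairing_comm] at hl
  have hzero :
      ((k : ℝ) - l) * (k + l + 2 * lam) * zonalPairing (gegT lam k) (gegT lam l) x y = 0 := by
    linear_combination hl - hk
  have hsub : (k : ℝ) - l ≠ 0 := sub_ne_zero.2 (by exact_mod_cast hkl)
  have hadd : (k : ℝ) + l + 2 * lam ≠ 0 := by
    have : (0 : ℝ) < k + l := by exact_mod_cast (by omega : 0 < k + l)
    positivity
  exact (mul_eq_zero.1 hzero).resolve_left (mul_ne_zero hsub hadd)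

theorem zonalPairing_gegT_gegD_of_le {j k : ℕ} (hjk : j ≤ k) :
    zonalPairing (gegT lam k) (gegD lam j) x y = 0 := by
  induction j using Nat.strong_induction_on with
  | _ j ih =>
    rcases j with _ | j
    · simp [zonalPairing]
    · have hsplit : gegD lam (j + 1) = gegT lam j + gegD lam (j - 1) :=
        funext (gegD_succ_eq_gegT_add lam · j)
      rw [hsplit, zonalPairing_add_right (by fun_prop) (by fun_prop) (by fun_prop),
        zonalPairing_gegT_gegT_of_ne hdim hlam hx hy (by omega), ih (j - 1) (by omega) (by omega),
        add_zero]

theorem zonalPairing_gegT_self_of_gegD {k : ℕ}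
    (hpred : zonalPairing (gegD lam (k - 1)) (gegD lam (k - 1)) x y = gegD lam (k - 1) ⟪x, y⟫)
    (hself : zonalPairing (gegD lam k) (gegD lam k) x y = gegD lam k ⟪x, y⟫) :
    zonalPairing (gegT lam k) (gegT lam k) x y = gegT lam k ⟪x, y⟫ := by
  rcases k.eq_zero_or_pos with rfl | hk
  · have : Nontrivial E := Module.nontrivial_of_finrank_pos (R := ℝ) (by
      have : (0 : ℝ) < Module.finrank ℝ E := by rw [← hdim]; positivity
      exact_mod_cast this)
    simp [zonalPairing, gegT_zero]
  have hparts := mul_zonalPairing_gegT_gegT hdim k k hx y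
  have hsq := zonalPairing_add_smul_of_orthogonal (continuous_gegT lam k)
    (continuous_gegD lam (k - 1))
    (zonalPairing_gegT_gegD_of_le hdim hlam hx hy (by omega))
    (zonalPairing_gegT_gegD_of_le hdim hlam hy hx (by omega)) k (2 * (k + lam))
  have hintegral : 4 * (k + lam) * (k + lam) * ∫ η : sphere (0 : E) 1,
        (⟪x, (η : E)⟫ * ⟪y, (η : E)⟫ - ⟪x, y⟫) *
          (gegD lam k ⟪x, (η : E)⟫ * gegD lam k ⟪y, (η : E)⟫) ∂sphereMeasure E =
      zonalPairing ((k : ℝ) • gegT lam k + (2 * (k + lam)) • gegD lam (k - 1))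
        ((k : ℝ) • gegT lam k + (2 * (k + lam)) • gegD lam (k - 1)) x y -
      4 * (k + lam) ^ 2 * ⟪x, y⟫ * zonalPairing (gegD lam k) (gegD lam k) x y := by
    simp only [zonalPairing, Pi.add_apply, Pi.smul_apply, smul_eq_mul, ← two_mul_mul_gegD]
    rw [← integral_const_mul, ← integral_const_mul, ← integral_sub
      (integrable_sphereMeasure (by fun_prop)) (integrable_sphereMeasure (by fun_prop))]
    exact integral_congr_ae (.of_forall fun η => by ring)
  rw [hintegral, hsq, hpred, hself] at hparts
  have : (0 : ℝ) < k := by exact_mod_cast hk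
  refine mul_left_cancel₀ (by positivity : 2 * (k : ℝ) * (k + lam) ≠ 0) ?_
  linear_combination -hparts + 2 * (k + lam) * two_mul_mul_gegD lam ⟪x, y⟫ k

theorem zonalPairing_gegD_self (k : ℕ) :
    zonalPairing (gegD lam k) (gegD lam k) x y = gegD lam k ⟪x, y⟫ := by
  induction k using Nat.strong_induction_on with
  | _ k ih =>
    rcases k with _ | k
    · simp [zonalPairing]
    · have hsplit : gegD lam (k + 1) = (1 : ℝ) • gegT lam k + (1 : ℝ) • gegD lam (k - 1) := by
        simp only [one_smul]
        exact funext (gegD_succ_eq_gegT_add lam · k)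
      have hpred := ih (k - 1) (by omega)
      rw [hsplit, zonalPairing_add_smul_of_orthogonal (continuous_gegT lam k)
        (continuous_gegD lam (k - 1))
        (zonalPairing_gegT_gegD_of_le hdim hlam hx hy (by omega))
        (zonalPairing_gegT_gegD_of_le hdim hlam hy hx (by omega)), hpred,
        zonalPairing_gegT_self_of_gegD hdim hlam hx hy hpred (ih k k.lt_succ_self)]
      simp

theorem zonalPairing_gegT_gegT (k l : ℕ) :
    zonalPairing (gegT lam k) (gegT lam l) x y = if k = l then gegT lam k ⟪x, y⟫ else 0 := by
  split_ifs with h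
  · subst h
    exact zonalPairing_gegT_self_of_gegD hdim hlam hx hy
      (zonalPairing_gegD_self hdim hlam hx hy _) (zonalPairing_gegD_self hdim hlam hx hy _)
  · exact zonalPairing_gegT_gegT_of_ne hdim hlam hx hy h

theorem integral_gegT_mul_gegT_comp_exp_smul {A : E →L[ℝ] E}
    (hA : A ∈ skewAdjoint (E →L[ℝ] E)) (k l : ℕ) (t : ℝ) :
    ∫ η : sphere (0 : E) 1, gegT lam k ⟪x, (η : E)⟫ •
        gegT lam l ⟪y, NormedSpace.exp (t • A) (η : E)⟫ ∂sphereMeasure E =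
      if k = l then gegT lam l ⟪y, NormedSpace.exp (t • A) x⟫ else 0 := by
  obtain ⟨R, hR⟩ := exists_linearIsometryEquiv_eq_exp_smul hA t
  have hadj (v : E) : ⟪y, R v⟫ = ⟪R.symm y, v⟫ := by
    rw [← R.inner_map_map (R.symm y), R.apply_symm_apply]
  have horth := zonalPairing_gegT_gegT hdim hlam hx ((R.symm.norm_map y).trans hy) k l
  simp only [smul_eq_mul, ← hR, hadj]
  rw [← zonalPairing, horth, real_inner_comm]
  split_ifs with h <;> simp [h]

theorem integral_gegT_mul_gegD_mul_inner_skewAdjoint {A : E →L[ℝ] E}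
    (hA : A ∈ skewAdjoint (E →L[ℝ] E)) (k l : ℕ) :
    ∫ η : sphere (0 : E) 1, gegT lam k ⟪x, (η : E)⟫ * (gegD lam l ⟪y, (η : E)⟫ * ⟪y, A η⟫)
        ∂sphereMeasure E =
      if k = l then gegD lam k ⟪x, y⟫ * ⟪y, A x⟫ else 0 := by
  rcases l.eq_zero_or_pos with rfl | hl
  · split_ifs with h <;> simp [h]
  have hfderiv (v : E) : fderiv ℝ (fun v => gegT lam l ⟪y, v⟫) v (A v) =
      2 * (l + lam) * (gegD lam l ⟪y, v⟫ * ⟪y, A v⟫) := by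
    have hd : HasFDerivAt (fun v => gegT lam l ⟪y, v⟫) _ v :=
      ((contDiff_gegT lam l (n := 1)).differentiable one_ne_zero _).hasDerivAt.comp_hasFDerivAt _
        (innerSL ℝ y).hasFDerivAt
    simp [hd.fderiv, deriv_gegT, mul_assoc]
  have hF : ContDiff ℝ 1 fun v : E => gegT lam l ⟪y, v⟫ :=
    (contDiff_gegT lam l).comp (contDiff_const.inner ℝ contDiff_id)
  have hleft := hasDerivAt_integral_comp_exp_smul A (φ := fun η => gegT lam k ⟪x, (η : E)⟫)
    (by fun_prop) hF
  have hright : HasDerivAt (fun t : ℝ =>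
      if k = l then gegT lam l ⟪y, NormedSpace.exp (t • A) x⟫ else 0)
      (if k = l then 2 * (l + lam) * (gegD lam l ⟪y, x⟫ * ⟪y, A x⟫) else 0) 0 := by
    split_ifs with h
    · have hexp := (hasDerivAt_exp_smul_const A (0 : ℝ)).clm_apply (hasDerivAt_const (0 : ℝ) x)
      refine ((hF.differentiable one_ne_zero _).hasFDerivAt.comp_hasDerivAt 0 hexp).congr_deriv ?_
      simpa using hfderiv x
    · exact hasDerivAt_const _ _
  simp only [integral_gegT_mul_gegT_comp_exp_smul hdim hlam hx hy hA] at hleft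
  have heq := hleft.unique hright
  simp only [hfderiv, smul_eq_mul, mul_left_comm _ (2 * (l + lam)), integral_const_mul] at heq
  have : (0 : ℝ) < l := by exact_mod_cast hl
  refine mul_left_cancel₀ (by positivity : 2 * (l + lam) ≠ 0) (heq.trans ?_)
  split_ifs with h
  · rw [h, real_inner_comm]
  · simp

end Zonal

/-! ### Term-by-term integration of products of series -/

theorem hasSum_integral_of_biorthogonal {α V W U : Type*} [MeasurableSpace α] {μ : Measure α}
    [IsFiniteMeasure μ] [NormedAddCommGroup V] [NormedSpace ℝ V] [NormedAddCommGroup W]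
    [NormedSpace ℝ W] [NormedAddCommGroup U] [NormedSpace ℝ U] (B : V →L[ℝ] W →L[ℝ] U)
    {f : ℕ → α → V} {F : α → V} {p : ℕ → ℝ} (hf : ∀ k, AEStronglyMeasurable (f k) μ)
    (hfp : ∀ k a, ‖f k a‖ ≤ p k) (hp : Summable p) (hF : ∀ a, HasSum (f · a) (F a))
    {g : ℕ → α → W} {G : α → W} {q : ℕ → ℝ} (hg : ∀ k, AEStronglyMeasurable (g k) μ)
    (hgq : ∀ k a, ‖g k a‖ ≤ q k) (hq : Summable q) (hG : ∀ a, HasSum (g · a) (G a))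
    {c : ℕ → U} (hc : ∀ k l, ∫ a, B (f k a) (g l a) ∂μ = if k = l then c k else 0) :
    HasSum c (∫ a, B (F a) (G a) ∂μ) := by
  have hGm : AEStronglyMeasurable G μ := aestronglyMeasurable_of_tendsto_ae Filter.atTop
    (fun n => Finset.aestronglyMeasurable_fun_sum (Finset.range n) fun k _ => hg k)
    (.of_forall fun a => (hG a).tendsto_sum_nat)
  have hGq (a : α) : ‖G a‖ ≤ ∑' l, q l :=
    (hG a).tsum_eq ▸ tsum_of_norm_bounded hq.hasSum (hgq · a)
  have hB (k : ℕ) (a : α) (w : W) {s : ℝ} (hw : ‖w‖ ≤ s) : ‖B (f k a) w‖ ≤ ‖B‖ * p k * s := by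
    have hpk : 0 ≤ p k := (norm_nonneg _).trans (hfp k a)
    exact (B.le_opNorm₂ _ _).trans (by gcongr; exact hfp k a)
  have hck (k : ℕ) : ∫ a, B (f k a) (G a) ∂μ = c k := by
    have h := hasSum_integral_of_dominated_convergence (fun l _ => ‖B‖ * p k * q l)
      (fun l => B.aestronglyMeasurable_comp₂ (hf k) (hg l))
      (fun l => .of_forall fun a => hB k a _ (hgq l a)) (.of_forall fun _ => hq.mul_left _)
      (integrable_const _) (.of_forall fun a => (hG a).mapL (B (f k a)))
    simp only [hc, eq_comm (a := k)] at h
    exact h.unique (hasSum_ite_eq k (c k))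
  simpa only [hck, B.flip_apply] using hasSum_integral_of_dominated_convergence
    (fun k _ => ‖B‖ * p k * ∑' l, q l) (fun k => B.aestronglyMeasurable_comp₂ (hf k) hGm)
    (fun k => .of_forall fun a => hB k a _ (hGq a))
    (.of_forall fun _ => (hp.mul_left _).mul_right _)
    (integrable_const _) (.of_forall fun a => (hF a).mapL (B.flip (G a)))

/-! ### Sums over `k + 2 j = n` -/

/-- The sum of `f k j` over all `k j : ℕ` with `k + 2 j = n`, by which double series are
regrouped according to the powers of a variable. -/
def weightedSum {M : Type*} [AddCommMonoid M] (f : ℕ → ℕ → M) (n : ℕ) : M :=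
  ∑ j ∈ Finset.range (n / 2 + 1), f (n - 2 * j) j

theorem weightedSum_congr {M : Type*} [AddCommMonoid M] {f g : ℕ → ℕ → M} {n : ℕ}
    (h : ∀ k j, k + 2 * j = n → f k j = g k j) : weightedSum f n = weightedSum g n :=
  Finset.sum_congr rfl fun j hj => h _ j (by have := Finset.mem_range.1 hj; omega)

theorem weightedSum_add {M : Type*} [AddCommMonoid M] (f g : ℕ → ℕ → M) (n : ℕ) :
    weightedSum (fun k j => f k j + g k j) n = weightedSum f n + weightedSum g n :=
  Finset.sum_add_distrib

theorem mul_weightedSum {R : Type*} [NonUnitalNonAssocSemiring R] (c : R) (f : ℕ → ℕ → R) (n : ℕ) :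
    c * weightedSum f n = weightedSum (fun k j => c * f k j) n :=
  Finset.mul_sum ..

theorem weightedSum_succ_of_shift_fst {M : Type*} [AddCommMonoid M] {f g : ℕ → ℕ → M}
    (h0 : ∀ j, f 0 j = 0) (hfg : ∀ k j, f (k + 1) j = g k j) (n : ℕ) :
    weightedSum f (n + 1) = weightedSum g n := by
  have hsum : ∑ j ∈ Finset.range (n / 2 + 1), f (n + 1 - 2 * j) j = weightedSum g n :=
    Finset.sum_congr rfl fun j hj => by
      have := Finset.mem_range.1 hj
      rw [← hfg, show n + 1 - 2 * j = n - 2 * j + 1 by omega]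
  rw [← hsum]
  refine (Finset.sum_subset (Finset.range_subset_range.2 (by omega)) fun j hj hj' => ?_).symm
  simp only [Finset.mem_range] at hj hj'
  rw [show n + 1 - 2 * j = 0 by omega, h0]

theorem weightedSum_succ_of_shift_snd {M : Type*} [AddCommMonoid M] {f g : ℕ → ℕ → M}
    (hf : ∀ k, f k 0 = 0) (hg : ∀ j, g 0 j = 0) (hfg : ∀ k j, f k (j + 1) = g (k + 1) j) (n : ℕ) :
    weightedSum f (n + 1) = weightedSum g n := by
  rcases n with _ | n
  · simp [weightedSum, hf, hg]
  · rw [weightedSum_succ_of_shift_fst hg (fun k j => (hfg k j).symm), weightedSum,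
      show (n + 1 + 1) / 2 + 1 = n / 2 + 1 + 1 by omega, Finset.sum_range_succ', hf, add_zero]
    exact Finset.sum_congr rfl fun j _ => by
      rw [show n + 1 + 1 - 2 * (j + 1) = n - 2 * j by omega]

theorem hasSum_weightedSum {M : Type*} [AddCommMonoid M] [TopologicalSpace M] [ContinuousAdd M]
    [RegularSpace M] {f : ℕ → ℕ → M} {a : M} (hf : HasSum (fun p : ℕ × ℕ => f p.1 p.2) a) :
    HasSum (weightedSum f) a := by
  let φ : ℕ × ℕ → ℕ × ℕ := fun p => (p.1 + 2 * p.2, p.2)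
  have hφ : Function.Injective φ := by
    rintro ⟨k, j⟩ ⟨k', j'⟩ h
    simp only [φ, Prod.mk.injEq] at h ⊢
    omega
  let g : ℕ × ℕ → M := fun p => if 2 * p.2 ≤ p.1 then f (p.1 - 2 * p.2) p.2 else 0
  have hg : HasSum g a := by
    rw [← hφ.hasSum_iff fun p hp => if_neg fun h => hp ⟨(p.1 - 2 * p.2, p.2), by simp [φ, h]⟩]
    simpa [g, φ, Function.comp_def] using hf
  refine hg.prod_fiberwise fun n => ?_
  have hfiber : weightedSum f n = ∑ j ∈ Finset.range (n / 2 + 1), g (n, j) :=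
    Finset.sum_congr rfl fun j hj =>
      (if_pos (by have := Finset.mem_range.1 hj; dsimp only; omega)).symm
  rw [hfiber]
  exact hasSum_sum_of_ne_finset_zero fun j hj =>
    if_neg (by have := Finset.mem_range.not.1 hj; dsimp only; omega)

/-! ### The plane wave expansion -/

/-- The coefficient of `z ^ (k + 2 j) * gegT lam k w` in the expansion of `exp (z * w)`. -/
def planeWaveCoeff (lam : ℝ) (k j : ℕ) : ℝ :=
  Real.Gamma (lam + 1) / (2 ^ (k + 2 * j) * j.factorial * Real.Gamma (k + j + lam + 1))

theorem planeWaveCoeff_nonneg {lam : ℝ} (hlam : 0 ≤ lam) (k j : ℕ) :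
    0 ≤ planeWaveCoeff lam k j := by
  have : 0 < Real.Gamma (k + j + lam + 1) := Real.Gamma_pos_of_pos (by positivity)
  have : 0 < Real.Gamma (lam + 1) := Real.Gamma_pos_of_pos (by positivity)
  unfold planeWaveCoeff
  positivity

theorem factorial_mul_Gamma_le {lam : ℝ} (hlam : 0 ≤ lam) (n : ℕ) :
    n.factorial * Real.Gamma (lam + 1) ≤ Real.Gamma (n + lam + 1) := by
  induction n with
  | zero => simp
  | succ n ih =>
    calc (n + 1).factorial * Real.Gamma (lam + 1)
        = (n + 1) * (n.factorial * Real.Gamma (lam + 1)) := by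
          rw [Nat.factorial_succ]; push_cast; ring
      _ ≤ (n + lam + 1) * Real.Gamma (n + lam + 1) := by
          have : 0 < Real.Gamma (n + lam + 1) := Real.Gamma_pos_of_pos (by positivity)
          gcongr; linarith
      _ = Real.Gamma ((n + 1 : ℕ) + lam + 1) := by
          rw [← Real.Gamma_add_one (by positivity)]; push_cast; ring_nf

theorem planeWaveCoeff_le {lam : ℝ} (hlam : 0 ≤ lam) (k j : ℕ) :
    planeWaveCoeff lam k j ≤ 1 / (k.factorial * j.factorial) := by
  have : 0 < Real.Gamma (lam + 1) := Real.Gamma_pos_of_pos (by positivity)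
  have hGkj : k.factorial * Real.Gamma (lam + 1) ≤ Real.Gamma (k + j + lam + 1) := by
    refine le_trans ?_ (by exact_mod_cast factorial_mul_Gamma_le hlam (k + j))
    gcongr
    omega
  calc planeWaveCoeff lam k j
      ≤ Real.Gamma (lam + 1) / (1 * j.factorial * (k.factorial * Real.Gamma (lam + 1))) := by
        unfold planeWaveCoeff
        gcongr
        exact one_le_pow₀ one_le_two
    _ = 1 / (k.factorial * j.factorial) := by field_simp

theorem planeWaveCoeff_eq_mul_succ_fst {lam : ℝ} (hlam : 0 ≤ lam) (k j : ℕ) :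
    planeWaveCoeff lam k j = 2 * (k + j + lam + 1) * planeWaveCoeff lam (k + 1) j := by
  have hG : Real.Gamma ((k + 1 : ℕ) + j + lam + 1)
      = (k + j + lam + 1) * Real.Gamma (k + j + lam + 1) := by
    rw [← Real.Gamma_add_one (by positivity)]; push_cast; ring_nf
  have : 0 < Real.Gamma (k + j + lam + 1) := Real.Gamma_pos_of_pos (by positivity)
  have hne : (k + j + lam + 1 : ℝ) ≠ 0 := by positivity
  rw [planeWaveCoeff, planeWaveCoeff, hG, show k + 1 + 2 * j = k + 2 * j + 1 by ring, pow_succ]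
  field_simp

theorem planeWaveCoeff_succ_fst (lam : ℝ) (k j : ℕ) :
    planeWaveCoeff lam (k + 1) j = 2 * (j + 1) * planeWaveCoeff lam k (j + 1) := by
  rw [planeWaveCoeff, planeWaveCoeff, Nat.factorial_succ,
    show k + 2 * (j + 1) = k + 1 + 2 * j + 1 by ring, pow_succ,
    show (k : ℝ) + (j + 1 : ℕ) + lam + 1 = (k + 1 : ℕ) + j + lam + 1 by push_cast; ring]
  push_cast
  field_simp

theorem mul_planeWaveCoeff {lam : ℝ} (hlam : 0 ≤ lam) (k j : ℕ) :
    (k + 2 * j : ℝ) * planeWaveCoeff lam k j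
      = planeWaveCoeff lam (k - 1) j * jacobiCoeff lam k
        + if j = 0 then 0 else planeWaveCoeff lam (k + 1) (j - 1) * (1 - jacobiCoeff lam k) := by
  have hpred : planeWaveCoeff lam (k - 1) j * jacobiCoeff lam k
      = 2 * (k + j + lam) * planeWaveCoeff lam k j * jacobiCoeff lam k := by
    rcases k with _ | k
    · simp [jacobiCoeff_zero]
    · rw [Nat.add_sub_cancel, planeWaveCoeff_eq_mul_succ_fst hlam]
      push_cast
      ring
  have hk := two_mul_mul_jacobiCoeff hlam k
  rw [hpred]
  rcases j with _ | j
  · rw [if_pos rfl]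
    push_cast
    linear_combination -planeWaveCoeff lam k 0 * hk
  · rw [if_neg j.succ_ne_zero, Nat.add_sub_cancel, planeWaveCoeff_succ_fst]
    push_cast
    linear_combination -planeWaveCoeff lam k (j + 1) * hk

theorem weightedSum_planeWaveCoeff_mul_gegT {lam : ℝ} (hlam : 0 ≤ lam) (w : ℝ) (n : ℕ) :
    weightedSum (fun k j => planeWaveCoeff lam k j * gegT lam k w) n = w ^ n / n.factorial := by
  induction n with
  | zero =>
    have hG : 0 < Real.Gamma (lam + 1) := Real.Gamma_pos_of_pos (by positivity)
    simp [weightedSum, planeWaveCoeff, gegT_zero, hG.ne']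
  | succ n ih =>
    have hup : weightedSum (fun k j =>
          planeWaveCoeff lam (k - 1) j * jacobiCoeff lam k * gegT lam k w) (n + 1)
        = weightedSum (fun k j =>
          planeWaveCoeff lam k j * (jacobiCoeff lam (k + 1) * gegT lam (k + 1) w)) n :=
      weightedSum_succ_of_shift_fst (fun j => by simp [jacobiCoeff_zero])
        (fun k j => by simp only [Nat.add_sub_cancel, mul_assoc]) n
    have hdown : weightedSum (fun k j => (if j = 0 then 0 else
          planeWaveCoeff lam (k + 1) (j - 1) * (1 - jacobiCoeff lam k)) * gegT lam k w) (n + 1)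
        = weightedSum (fun k j => planeWaveCoeff lam k j * (if k = 0 then 0 else
          (1 - jacobiCoeff lam (k - 1)) * gegT lam (k - 1) w)) n :=
      weightedSum_succ_of_shift_snd (by simp) (by simp) (fun k j => by simp [mul_assoc]) n
    have hsucc :
        (n + 1 : ℝ) * weightedSum (fun k j => planeWaveCoeff lam k j * gegT lam k w) (n + 1)
          = w * weightedSum (fun k j => planeWaveCoeff lam k j * gegT lam k w) n := by
      calc _ = weightedSum (fun k j =>
              planeWaveCoeff lam (k - 1) j * jacobiCoeff lam k * gegT lam k w
                + (if j = 0 then 0 else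
                  planeWaveCoeff lam (k + 1) (j - 1) * (1 - jacobiCoeff lam k)) * gegT lam k w)
                (n + 1) := by
            rw [mul_weightedSum]
            refine weightedSum_congr fun k j hkj => ?_
            rw [← add_mul, ← mul_planeWaveCoeff hlam, ← mul_assoc]
            exact_mod_cast congrArg (fun i : ℕ => (i : ℝ) * _ * _) hkj.symm
        _ = _ := by
            rw [weightedSum_add, hup, hdown, ← weightedSum_add, mul_weightedSum]
            exact weightedSum_congr fun k j _ => by rw [← mul_add, ← mul_gegT hlam]; ring
    rw [ih] at hsucc
    rw [Nat.factorial_succ, Nat.cast_mul, Nat.cast_succ, pow_succ]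
    field_simp at hsucc ⊢
    linear_combination hsucc

/-- The normalized Bessel function `2 ^ lam * Γ (lam + 1) * z ^ (-lam) * J_{k + lam} z`, written
with `besselJt` so that it is meaningful for every real `z`. -/
def normBessel (lam : ℝ) (k : ℕ) (z : ℝ) : ℝ :=
  2 ^ lam * Real.Gamma (lam + 1) * (z ^ k * besselJt (k + lam) z)

theorem norm_planeWaveCoeff_mul_le {lam : ℝ} (hlam : 0 ≤ lam) (k j : ℕ) (z : ℝ) :
    ‖planeWaveCoeff lam k j * (-1) ^ j * z ^ (2 * j)‖
      ≤ 1 / k.factorial * ((z ^ 2) ^ j / j.factorial) := by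
  calc ‖planeWaveCoeff lam k j * (-1) ^ j * z ^ (2 * j)‖
      = planeWaveCoeff lam k j * (z ^ 2) ^ j := by
        rw [norm_mul, norm_mul, norm_pow, norm_neg, norm_one, one_pow, mul_one, pow_mul, norm_pow,
          norm_pow, Real.norm_eq_abs, Real.norm_eq_abs, sq_abs,
          abs_of_nonneg (planeWaveCoeff_nonneg hlam k j)]
    _ ≤ 1 / (k.factorial * j.factorial) * (z ^ 2) ^ j := by gcongr; exact planeWaveCoeff_le hlam k j
    _ = 1 / k.factorial * ((z ^ 2) ^ j / j.factorial) := by field_simp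

theorem hasSum_planeWaveCoeff_mul {lam : ℝ} (hlam : 0 ≤ lam) (k : ℕ) (z : ℝ) :
    HasSum (fun j => planeWaveCoeff lam k j * (-1) ^ j * z ^ (2 * j))
      (2 ^ lam * Real.Gamma (lam + 1) * besselJt (k + lam) z) := by
  have hterm (j : ℕ) : planeWaveCoeff lam k j * (-1) ^ j * z ^ (2 * j)
      = 2 ^ lam * Real.Gamma (lam + 1) * ((-1) ^ j * (z / 2) ^ (2 * j)
        / (j.factorial * Real.Gamma (j + (k + lam) + 1) * 2 ^ (k + lam))) := by
    have : 0 < Real.Gamma (k + j + lam + 1) := Real.Gamma_pos_of_pos (by positivity)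
    have : (0 : ℝ) < 2 ^ lam := by positivity
    rw [planeWaveCoeff, show (j : ℝ) + (k + lam) + 1 = k + j + lam + 1 by ring,
      Real.rpow_add two_pos, Real.rpow_natCast, div_pow, pow_add]
    field_simp
  have hsum : Summable fun j => planeWaveCoeff lam k j * (-1) ^ j * z ^ (2 * j) :=
    .of_norm_bounded ((Real.summable_pow_div_factorial (z ^ 2)).mul_left _)
      (norm_planeWaveCoeff_mul_le hlam k · z)
  have htsum := hsum.hasSum
  simp only [hterm, tsum_mul_left] at htsum ⊢
  exact htsum

theorem abs_normBessel_le {lam : ℝ} (hlam : 0 ≤ lam) (k : ℕ) (z : ℝ) :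
    |normBessel lam k z| ≤ |z| ^ k / k.factorial * Real.exp (z ^ 2) := by
  have hexp : HasSum (fun j : ℕ => 1 / k.factorial * ((z ^ 2) ^ j / j.factorial))
      (1 / k.factorial * Real.exp (z ^ 2)) := by
    rw [Real.exp_eq_exp_ℝ]
    exact (NormedSpace.expSeries_div_hasSum_exp (z ^ 2)).mul_left _
  have hle : ‖2 ^ lam * Real.Gamma (lam + 1) * besselJt (k + lam) z‖
      ≤ 1 / k.factorial * Real.exp (z ^ 2) := by
    rw [← (hasSum_planeWaveCoeff_mul hlam k z).tsum_eq]
    exact tsum_of_norm_bounded hexp (norm_planeWaveCoeff_mul_le hlam k · z)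
  calc |normBessel lam k z|
      = |z| ^ k * ‖2 ^ lam * Real.Gamma (lam + 1) * besselJt (k + lam) z‖ := by
        rw [normBessel, ← abs_pow, Real.norm_eq_abs, ← abs_mul]
        congr 1
        ring
    _ ≤ |z| ^ k * (1 / k.factorial * Real.exp (z ^ 2)) := by gcongr
    _ = |z| ^ k / k.factorial * Real.exp (z ^ 2) := by ring

/-- A summable majorant for the terms of the Gegenbauer expansions at radius `z`. -/
def zonalMajorant (lam z : ℝ) (k : ℕ) : ℝ :=
  2 * (4 * (2 + lam)) * Real.exp (z ^ 2) * ((|z| * (4 * (2 + lam))) ^ k / k.factorial)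

theorem summable_zonalMajorant (lam z : ℝ) : Summable (zonalMajorant lam z) :=
  (Real.summable_pow_div_factorial _).mul_left _

theorem abs_normBessel_mul_le_zonalMajorant {lam : ℝ} (hlam : 0 ≤ lam) (z : ℝ) (k : ℕ) {q : ℝ}
    (hq : |q| ≤ 2 * (4 * (2 + lam)) ^ (k + 1)) :
    |normBessel lam k z * q| ≤ zonalMajorant lam z k := by
  calc |normBessel lam k z * q|
      ≤ |z| ^ k / k.factorial * Real.exp (z ^ 2) * (2 * (4 * (2 + lam)) ^ (k + 1)) := by
        rw [abs_mul]
        gcongr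
        exact abs_normBessel_le hlam k z
    _ = zonalMajorant lam z k := by
        rw [zonalMajorant, mul_pow |z|, pow_succ]
        ring

theorem abs_normBessel_mul_gegT_le {lam : ℝ} (hlam : 0 ≤ lam) (z : ℝ) {s : ℝ} (hs : |s| ≤ 1)
    (k : ℕ) :
    |normBessel lam k z * gegT lam k s| ≤ zonalMajorant lam z k :=
  abs_normBessel_mul_le_zonalMajorant hlam z k (abs_gegT_le hlam hs k)

theorem abs_normBessel_mul_gegD_le {lam : ℝ} (hlam : 0 ≤ lam) (z : ℝ) {s : ℝ} (hs : |s| ≤ 1)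
    (k : ℕ) :
    |normBessel lam k z * gegD lam k s| ≤ zonalMajorant lam z k := by
  refine abs_normBessel_mul_le_zonalMajorant hlam z k ((abs_gegD_le hlam hs k).trans ?_)
  have hpow : 0 ≤ (4 * (2 + lam)) ^ k := by positivity
  rw [pow_succ]
  nlinarith

theorem summable_planeWaveCoeff_mul_gegT {lam : ℝ} (hlam : 0 ≤ lam) (z : ℂ) {s : ℝ} (hs : |s| ≤ 1) :
    Summable fun p : ℕ × ℕ =>
      z ^ (p.1 + 2 * p.2) * ((planeWaveCoeff lam p.1 p.2 * gegT lam p.1 s : ℝ) : ℂ) := by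
  have hk := Real.summable_pow_div_factorial (‖z‖ * (4 * (2 + lam)))
  have hj := Real.summable_pow_div_factorial (‖z‖ ^ 2)
  refine .of_norm_bounded ((hk.mul_of_nonneg hj (fun _ => by positivity)
    (fun _ => by positivity)).mul_left (2 * (4 * (2 + lam)))) ?_
  rintro ⟨k, j⟩
  have hle := planeWaveCoeff_le hlam k j
  have hnonneg := planeWaveCoeff_nonneg hlam k j
  have hZ := abs_gegT_le hlam hs k
  calc ‖z ^ (k + 2 * j) * ((planeWaveCoeff lam k j * gegT lam k s : ℝ) : ℂ)‖
      = ‖z‖ ^ (k + 2 * j) * (planeWaveCoeff lam k j * |gegT lam k s|) := by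
        rw [norm_mul, norm_pow, Complex.norm_real, Real.norm_eq_abs, abs_mul, abs_of_nonneg hnonneg]
    _ ≤ ‖z‖ ^ (k + 2 * j) *
        (1 / (k.factorial * j.factorial) * (2 * (4 * (2 + lam)) ^ (k + 1))) := by
        gcongr
    _ = _ := by
        rw [pow_add, pow_mul, mul_pow ‖z‖, pow_succ (4 * (2 + lam))]
        field_simp

theorem hasSum_weightedSum_pow_mul {lam : ℝ} (hlam : 0 ≤ lam) (z : ℂ) (s : ℝ) :
    HasSum (weightedSum fun k j =>
        z ^ (k + 2 * j) * ((planeWaveCoeff lam k j * gegT lam k s : ℝ) : ℂ))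
      (Complex.exp (z * s)) := by
  have hterm (n : ℕ) : weightedSum (fun k j =>
        z ^ (k + 2 * j) * ((planeWaveCoeff lam k j * gegT lam k s : ℝ) : ℂ)) n
      = (z * s) ^ n / n.factorial := by
    rw [weightedSum_congr
      (g := fun k j => z ^ n * ((planeWaveCoeff lam k j * gegT lam k s : ℝ) : ℂ))
      fun k j hkj => by rw [hkj], ← mul_weightedSum]
    have hpow := congrArg (fun a : ℝ => (a : ℂ)) (weightedSum_planeWaveCoeff_mul_gegT hlam s n)
    rw [weightedSum] at hpow ⊢
    push_cast at hpow ⊢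
    rw [hpow, mul_pow, mul_div_assoc]
  rw [funext hterm, Complex.exp_eq_exp_ℂ]
  exact NormedSpace.expSeries_div_hasSum_exp _

theorem hasSum_planeWave {lam : ℝ} (hlam : 0 ≤ lam) (z : ℝ) {s : ℝ} (hs : |s| ≤ 1) :
    HasSum (fun k => Complex.I ^ k * ((normBessel lam k z * gegT lam k s : ℝ) : ℂ))
      (Complex.exp (Complex.I * z * s)) := by
  have hsum := (summable_planeWaveCoeff_mul_gegT hlam (Complex.I * z) hs).hasSum
  rw [(hasSum_weightedSum (f := fun k j => (Complex.I * z) ^ (k + 2 * j) *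
    ((planeWaveCoeff lam k j * gegT lam k s : ℝ) : ℂ)) hsum).unique
    (hasSum_weightedSum_pow_mul hlam (Complex.I * z) s)] at hsum
  refine hsum.prod_fiberwise fun k => ?_
  have hterm (j : ℕ) :
      (Complex.I * z) ^ (k + 2 * j) * ((planeWaveCoeff lam k j * gegT lam k s : ℝ) : ℂ)
        = Complex.I ^ k * ((z ^ k * gegT lam k s : ℝ) : ℂ)
          * ((planeWaveCoeff lam k j * (-1) ^ j * z ^ (2 * j) : ℝ) : ℂ) := by
    rw [mul_pow, pow_add Complex.I, pow_mul Complex.I, Complex.I_sq]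
    push_cast
    ring
  have hvalue : Complex.I ^ k * ((normBessel lam k z * gegT lam k s : ℝ) : ℂ)
      = Complex.I ^ k * ((z ^ k * gegT lam k s : ℝ) : ℂ)
        * ((2 ^ lam * Real.Gamma (lam + 1) * besselJt (k + lam) z : ℝ) : ℂ) := by
    rw [normBessel]
    push_cast
    ring
  simp only [hterm, hvalue]
  exact ((hasSum_planeWaveCoeff_mul hlam k z).mapL Complex.ofRealCLM).mul_left _

theorem hasSum_planeWave_neg {lam : ℝ} (hlam : 0 ≤ lam) (z : ℝ) {s : ℝ} (hs : |s| ≤ 1) :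
    HasSum (fun k => (-Complex.I) ^ k * ((normBessel lam k z * gegT lam k s : ℝ) : ℂ))
      (Complex.exp (-(Complex.I * z * s))) := by
  simpa [← Complex.exp_conj] using (hasSum_planeWave hlam z hs).mapL (Complex.conjCLE : ℂ →L[ℝ] ℂ)

theorem norm_planeWave_term_le {lam : ℝ} (hlam : 0 ≤ lam) {c : ℂ} (hc : ‖c‖ = 1) (z : ℝ) {s : ℝ}
    (hs : |s| ≤ 1) (k : ℕ) :
    ‖c ^ k * ((normBessel lam k z * gegT lam k s : ℝ) : ℂ)‖ ≤ zonalMajorant lam z k := by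
  rw [norm_mul, norm_pow, hc, one_pow, one_mul, Complex.norm_real]
  exact abs_normBessel_mul_gegT_le hlam z hs k

/-! ### The addition theorem for Bessel functions -/

section Addition

open Metric
open scoped RealInnerProductSpace

variable {E : Type*} [NormedAddCommGroup E] [InnerProductSpace ℝ E]

theorem abs_inner_coe_sphere_le {x : E} (hx : ‖x‖ = 1) (η : sphere (0 : E) 1) :
    |⟪x, (η : E)⟫| ≤ 1 := by
  simpa [hx] using abs_real_inner_le_norm x η

theorem exists_norm_eq_one_norm_smul_eq [Nontrivial E] (x : E) :
    ∃ v : E, ‖v‖ = 1 ∧ ‖x‖ • v = x := by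
  by_cases hx : x = 0
  · obtain ⟨v, hv⟩ := exists_norm_eq E zero_le_one
    exact ⟨v, hv, by rw [hx, norm_zero, zero_smul]⟩
  · exact ⟨‖x‖⁻¹ • x, norm_smul_inv_norm (𝕜 := ℝ) hx, smul_inv_smul₀ (norm_ne_zero_iff.2 hx) x⟩

variable [FiniteDimensional ℝ E] [MeasurableSpace E] [BorelSpace E]

variable {lam : ℝ} (hdim : 2 * lam + 2 = Module.finrank ℝ E) (hlam : 0 ≤ lam) {x y : E}
  (hx : ‖x‖ = 1) (hy : ‖y‖ = 1)
include hdim hlam hx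

theorem integral_exp_inner (z : ℝ) :
    ∫ η : sphere (0 : E) 1, Complex.exp (Complex.I * z * ⟪x, (η : E)⟫) ∂sphereMeasure E
      = normBessel lam 0 z := by
  have hterm (k : ℕ) : ∫ η : sphere (0 : E) 1,
      Complex.I ^ k * ((normBessel lam k z * gegT lam k ⟪x, (η : E)⟫ : ℝ) : ℂ) ∂sphereMeasure E
      = if k = 0 then (normBessel lam 0 z : ℂ) else 0 := by
    have hpair := zonalPairing_gegT_gegT hdim hlam hx hx k 0
    simp only [zonalPairing, gegT_zero, mul_one] at hpair
    rw [integral_const_mul, integral_complex_ofReal, integral_const_mul, hpair]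
    rcases k with _ | k <;> simp [gegT_zero]
  have hsum := hasSum_integral_of_dominated_convergence (μ := sphereMeasure E)
    (fun k _ => zonalMajorant lam z k)
    (fun k => (integrable_sphereMeasure (by fun_prop)).aestronglyMeasurable)
    (fun k => .of_forall fun η : sphere (0 : E) 1 =>
      norm_planeWave_term_le hlam Complex.norm_I z (abs_inner_coe_sphere_le hx η) k)
    (.of_forall fun _ => summable_zonalMajorant lam z) (integrable_const _)
    (.of_forall fun η => hasSum_planeWave hlam z (abs_inner_coe_sphere_le hx η))
  simp only [hterm] at hsum
  exact hsum.unique (hasSum_ite_eq 0 _)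

include hy

theorem integral_planeWave_terms (a b : ℝ) (k l : ℕ) :
    ∫ η : sphere (0 : E) 1,
        Complex.I ^ k * ((normBessel lam k a * gegT lam k ⟪x, (η : E)⟫ : ℝ) : ℂ)
          * ((-Complex.I) ^ l * ((normBessel lam l b * gegT lam l ⟪y, (η : E)⟫ : ℝ) : ℂ))
        ∂sphereMeasure E
      = if k = l then ((normBessel lam k a * normBessel lam k b * gegT lam k ⟪x, y⟫ : ℝ) : ℂ)
        else 0 := by
  have hfactor (η : sphere (0 : E) 1) :
      Complex.I ^ k * ((normBessel lam k a * gegT lam k ⟪x, (η : E)⟫ : ℝ) : ℂ)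
          * ((-Complex.I) ^ l * ((normBessel lam l b * gegT lam l ⟪y, (η : E)⟫ : ℝ) : ℂ))
        = Complex.I ^ k * (-Complex.I) ^ l * ((normBessel lam k a * normBessel lam l b : ℝ) : ℂ)
          * ((gegT lam k ⟪x, (η : E)⟫ * gegT lam l ⟪y, (η : E)⟫ : ℝ) : ℂ) := by
    push_cast
    ring
  have hpair := zonalPairing_gegT_gegT hdim hlam hx hy k l
  rw [zonalPairing] at hpair
  simp only [hfactor]
  rw [integral_const_mul, integral_complex_ofReal, hpair]
  split_ifs with hkl
  · subst hkl
    rw [← mul_pow, mul_neg, Complex.I_mul_I, neg_neg, one_pow]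
    push_cast
    ring
  · simp

theorem hasSum_normBessel_addition (a b : ℝ) :
    HasSum (fun k => normBessel lam k a * normBessel lam k b * gegT lam k ⟪x, y⟫)
      (normBessel lam 0 ‖a • x - b • y‖) := by
  have : Nontrivial E := ⟨x, 0, by rintro rfl; simp at hx⟩
  obtain ⟨v, hv, hvxy⟩ := exists_norm_eq_one_norm_smul_eq (a • x - b • y)
  have hexp (η : sphere (0 : E) 1) :
      Complex.exp (Complex.I * a * ⟪x, (η : E)⟫) * Complex.exp (-(Complex.I * b * ⟪y, (η : E)⟫))
        = Complex.exp (Complex.I * ‖a • x - b • y‖ * ⟪v, (η : E)⟫) := by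
    have hinner : ‖a • x - b • y‖ * ⟪v, (η : E)⟫ = a * ⟪x, (η : E)⟫ - b * ⟪y, (η : E)⟫ := by
      rw [← real_inner_smul_left, hvxy, inner_sub_left, real_inner_smul_left, real_inner_smul_left]
    rw [← Complex.exp_add, mul_assoc, mul_assoc, mul_assoc, ← Complex.ofReal_mul,
      ← Complex.ofReal_mul, ← Complex.ofReal_mul, hinner]
    push_cast
    ring_nf
  have hsum := hasSum_integral_of_biorthogonal (μ := sphereMeasure E) (ContinuousLinearMap.mul ℝ ℂ)
    (fun k => (integrable_sphereMeasure (by fun_prop)).aestronglyMeasurable)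
    (fun k η => norm_planeWave_term_le hlam Complex.norm_I a (abs_inner_coe_sphere_le hx η) k)
    (summable_zonalMajorant lam a)
    (fun η => hasSum_planeWave hlam a (abs_inner_coe_sphere_le hx η))
    (fun k => (integrable_sphereMeasure (by fun_prop)).aestronglyMeasurable)
    (fun k η => norm_planeWave_term_le hlam (by simp) b (abs_inner_coe_sphere_le hy η) k)
    (summable_zonalMajorant lam b)
    (fun η => hasSum_planeWave_neg hlam b (abs_inner_coe_sphere_le hy η))
    (integral_planeWave_terms hdim hlam hx hy a b)
  simp only [ContinuousLinearMap.mul_apply', hexp, integral_exp_inner hdim hlam hv] at hsum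
  exact_mod_cast hsum

end Addition

/-! ### Clifford maps and the spherical Dirac operator -/

section Clifford

open Metric
open scoped RealInnerProductSpace

variable {E : Type*} [NormedAddCommGroup E] [InnerProductSpace ℝ E]
  {A : Type*} [NormedRing A] [NormedAlgebra ℝ A]

/-- `γ` satisfies the relations `γ(x)² = -‖x‖²` of the Clifford algebra of signature `(0, m)`. -/
def IsCliffordMap (γ : E →L[ℝ] A) : Prop :=
  ∀ x, γ x * γ x = -(‖x‖ ^ 2 • (1 : A))

/-- The bivector `x ∧ y` in the Clifford algebra, through `xy = x ∧ y - ⟪x, y⟫`. -/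
def bivector (γ : E →L[ℝ] A) (x y : E) : A :=
  γ x * γ y + ⟪x, y⟫ • (1 : A)

@[fun_prop]
theorem continuous_bivector (γ : E →L[ℝ] A) : Continuous fun p : E × E => bivector γ p.1 p.2 := by
  unfold bivector
  fun_prop

theorem contDiff_bivector_right (γ : E →L[ℝ] A) (x : E) {n : WithTop ℕ∞} :
    ContDiff ℝ n (bivector γ x) :=
  (contDiff_const.mul γ.contDiff).add ((contDiff_const.inner ℝ contDiff_id).smul contDiff_const)

theorem bivector_smul_left (γ : E →L[ℝ] A) (c : ℝ) (x y : E) :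
    bivector γ (c • x) y = c • bivector γ x y := by
  simp [bivector, inner_smul_left, smul_smul]

theorem bivector_smul_right (γ : E →L[ℝ] A) (c : ℝ) (x y : E) :
    bivector γ x (c • y) = c • bivector γ x y := by
  simp [bivector, inner_smul_right, smul_smul]

theorem fderiv_bivector_right (γ : E →L[ℝ] A) (x η v : E) :
    fderiv ℝ (bivector γ x) η v = bivector γ x v := by
  have hd : HasFDerivAt (bivector γ x) _ η :=
    (γ.hasFDerivAt.const_mul (γ x)).add ((innerSL ℝ x).hasFDerivAt.smul_const (1 : A))
  simp [hd.fderiv, bivector]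

theorem sum_inner_smul_bivector {ι : Type*} [Fintype ι] (b : OrthonormalBasis ι ℝ E)
    (γ : E →L[ℝ] A) (η x : E) : ∑ i, ⟪x, b i⟫ • bivector γ η (b i) = bivector γ η x := by
  conv_rhs => rw [← b.sum_repr' x]
  simp [bivector, Finset.mul_sum, inner_sum, inner_smul_right, Finset.sum_add_distrib,
    Finset.sum_smul, smul_smul, real_inner_comm]

section IsCliffordMap

variable {γ : E →L[ℝ] A} (hγ : IsCliffordMap γ)
include hγ

theorem IsCliffordMap.mul_add_mul_swap (x y : E) :
    γ x * γ y + γ y * γ x = -((2 * ⟪x, y⟫) • (1 : A)) := by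
  have hadd := hγ (x + y)
  rw [map_add, mul_add, add_mul, add_mul, hγ x, hγ y, norm_add_sq_real] at hadd
  linear_combination (norm := module) hadd

theorem IsCliffordMap.bivector_swap (x y : E) : bivector γ y x = -bivector γ x y := by
  have hswap := hγ.mul_add_mul_swap x y
  rw [bivector, bivector, real_inner_comm x y]
  linear_combination (norm := module) hswap

theorem IsCliffordMap.two_smul_bivector (x y : E) :
    (2 : ℝ) • bivector γ x y = γ x * γ y - γ y * γ x := by
  have hswap := hγ.mul_add_mul_swap x y
  rw [bivector]
  linear_combination (norm := module) hswap

theorem IsCliffordMap.bivector_mul_bivector_swap (x y : E) :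
    bivector γ x y * bivector γ y x = (‖x‖ ^ 2 * ‖y‖ ^ 2 - ⟪x, y⟫ ^ 2) • (1 : A) := by
  have hsq : γ x * γ y * (γ y * γ x) = (‖x‖ ^ 2 * ‖y‖ ^ 2) • (1 : A) := by
    rw [mul_assoc, ← mul_assoc (γ y), hγ y, neg_mul, smul_mul_assoc, one_mul, mul_neg,
      mul_smul_comm, hγ x, smul_neg, neg_neg, smul_smul, mul_comm]
  have hswap := congrArg (⟪x, y⟫ • ·) (hγ.mul_add_mul_swap x y)
  simp only [bivector, add_mul, mul_add, hsq, real_inner_comm x y, smul_mul_assoc, mul_smul_comm,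
    one_mul, mul_one] at hswap ⊢
  linear_combination (norm := module) hswap

section OrthonormalBasis

variable {ι : Type*} [Fintype ι] (b : OrthonormalBasis ι ℝ E)

theorem IsCliffordMap.sum_mul_self :
    ∑ i, γ (b i) * γ (b i) = -((Fintype.card ι : ℝ) • (1 : A)) := by
  simp [hγ _, Nat.cast_smul_eq_nsmul]

theorem IsCliffordMap.sum_mul_mul (x : E) :
    ∑ i, γ (b i) * γ x * γ (b i) = ((Fintype.card ι : ℝ) - 2) • γ x := by
  have hterm (i : ι) : γ (b i) * γ x * γ (b i) =
      -(γ x * (γ (b i) * γ (b i))) - (2 : ℝ) • γ (⟪b i, x⟫ • b i) := by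
    rw [eq_sub_of_add_eq (hγ.mul_add_mul_swap (b i) x), sub_mul, neg_mul, smul_mul_assoc, one_mul,
      mul_assoc, map_smul]
    module
  simp_rw [hterm]
  rw [Finset.sum_sub_distrib, Finset.sum_neg_distrib, ← Finset.mul_sum, hγ.sum_mul_self,
    ← Finset.smul_sum, ← map_sum, b.sum_repr', mul_neg, mul_smul_comm, mul_one]
  module

theorem IsCliffordMap.sum_bivector_mul_bivector (x y : E) :
    ∑ i, bivector γ x (b i) * bivector γ y (b i) =
      ((Fintype.card ι : ℝ) - 2) • bivector γ x y
        - (((Fintype.card ι : ℝ) - 1) * ⟪x, y⟫) • (1 : A) := by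
  have hterm (i : ι) : bivector γ x (b i) * bivector γ y (b i) =
      γ x * (γ (b i) * γ y * γ (b i)) + γ x * γ (⟪b i, y⟫ • b i) + γ y * γ (⟪b i, x⟫ • b i)
        + (⟪x, b i⟫ * ⟪b i, y⟫) • (1 : A) := by
    simp only [bivector, add_mul, mul_add, map_smul, smul_mul_assoc, mul_smul_comm, one_mul,
      mul_one, mul_assoc, real_inner_comm (b i)]
    module
  simp_rw [hterm]
  rw [Finset.sum_add_distrib, Finset.sum_add_distrib, Finset.sum_add_distrib, ← Finset.mul_sum,
    hγ.sum_mul_mul, ← Finset.mul_sum, ← Finset.mul_sum, ← map_sum, ← map_sum, b.sum_repr',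
    b.sum_repr', ← Finset.sum_smul, b.sum_inner_mul_inner, add_assoc (γ x * _),
    hγ.mul_add_mul_swap, mul_smul_comm, bivector]
  module

theorem IsCliffordMap.sum_bivector_mul (φ : E →L[ℝ] A) (x : E) :
    ∑ i, bivector γ x (b i) * φ (b i) =
      (2⁻¹ : ℝ) • ∑ i, ∑ j, γ (b i) * γ (b j) * φ (rotationGenerator (b i) (b j) x) := by
  have hx : ∑ i, ⟪b i, x⟫ • γ (b i) = γ x := by
    simp_rw [← map_smul]
    rw [← map_sum, b.sum_repr']
  have hfst : ∑ i, ∑ j, γ (b i) * γ (b j) * (⟪b i, x⟫ • φ (b j)) =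
      ∑ j, γ x * γ (b j) * φ (b j) := by
    rw [Finset.sum_comm]
    simp_rw [← hx, Finset.sum_mul, mul_smul_comm, smul_mul_assoc]
  have hsnd : ∑ i, ∑ j, γ (b i) * γ (b j) * (⟪b j, x⟫ • φ (b i)) =
      ∑ i, γ (b i) * γ x * φ (b i) := by
    simp_rw [← hx, Finset.mul_sum, Finset.sum_mul, mul_smul_comm, smul_mul_assoc]
  simp_rw [rotationGenerator_apply, map_sub, map_smul, mul_sub, Finset.sum_sub_distrib]
  rw [hfst, hsnd, ← Finset.sum_sub_distrib, eq_inv_smul_iff₀ two_ne_zero, Finset.smul_sum]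
  simp_rw [← sub_mul, ← hγ.two_smul_bivector, smul_mul_assoc]

theorem IsCliffordMap.bivector_eq_sum_inner_rotationGenerator (η y : E) :
    bivector γ η y = (2⁻¹ : ℝ) • ∑ i, ∑ j, ⟪y, rotationGenerator (b i) (b j) η⟫ •
      (γ (b i) * γ (b j)) := by
  simpa [sum_inner_smul_bivector] using
    hγ.sum_bivector_mul b ((innerSL ℝ y).smulRight (1 : A)) η

end OrthonormalBasis
end IsCliffordMap

variable [FiniteDimensional ℝ E]

/-- The spherical Dirac operator `∑ i, (η ∧ b i) ∂ᵢ` on functions with values in the Clifford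
algebra, for an orthonormal basis `b`. It differentiates along the sphere only. -/
def sphericalDirac (γ : E →L[ℝ] A) (F : E → A) (η : E) : A :=
  ∑ i, bivector γ η (stdOrthonormalBasis ℝ E i) * fderiv ℝ F η (stdOrthonormalBasis ℝ E i)

theorem sphericalDirac_comp_inner_smul (γ : E →L[ℝ] A) {f : ℝ → ℝ} (hf : ContDiff ℝ 1 f)
    {F : E → A} (hF : ContDiff ℝ 1 F) (x η : E) :
    sphericalDirac γ (fun η => f ⟪x, η⟫ • F η) η =
      deriv f ⟪x, η⟫ • (bivector γ η x * F η) + f ⟪x, η⟫ • sphericalDirac γ F η := by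
  have hd : HasFDerivAt (fun η => f ⟪x, η⟫ • F η) _ η :=
    ((hf.differentiable one_ne_zero _).hasDerivAt.comp_hasFDerivAt _
      (innerSL ℝ x).hasFDerivAt).smul (hF.differentiable one_ne_zero _).hasFDerivAt
  simp only [sphericalDirac, hd.fderiv]
  rw [← sum_inner_smul_bivector (stdOrthonormalBasis ℝ E) γ η x, Finset.sum_mul, Finset.smul_sum,
    Finset.smul_sum, ← Finset.sum_add_distrib]
  refine Finset.sum_congr rfl fun i _ => ?_
  simp only [Function.comp_apply, _root_.add_apply, _root_.smul_apply,
    ContinuousLinearMap.smulRight_apply, innerSL_apply_apply, smul_eq_mul, mul_add, mul_smul_comm,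
    smul_mul_assoc]
  module

theorem IsCliffordMap.sphericalDirac_gegD_smul_bivector {γ : E →L[ℝ] A} (hγ : IsCliffordMap γ)
    {lam : ℝ} (hdim : 2 * lam + 2 = Module.finrank ℝ E) (hlam : 0 ≤ lam) {y : E} (hy : ‖y‖ = 1)
    (η : sphere (0 : E) 1) (l : ℕ) :
    sphericalDirac γ (fun η => gegD lam l ⟪y, η⟫ • bivector γ y η) η =
      (2 * lam * gegD lam l ⟪y, (η : E)⟫) • bivector γ (η : E) y -
        (2 * (l + lam) * (jacobiCoeff lam l * (1 - jacobiCoeff lam l)) *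
          gegT lam l ⟪y, (η : E)⟫) • (1 : A) := by
  have hη : sphericalDirac γ (bivector γ y) (η : E) =
      (2 * lam) • bivector γ (η : E) y - ((2 * lam + 1) * ⟪y, (η : E)⟫) • (1 : A) := by
    simp_rw [sphericalDirac, fderiv_bivector_right]
    rw [hγ.sum_bivector_mul_bivector, Fintype.card_fin, ← hdim, real_inner_comm]
    ring_nf
  have hode := congrArg (· • (1 : A)) (gegD_differential_equation hlam ⟪y, (η : E)⟫ l)
  rw [sphericalDirac_comp_inner_smul γ (contDiff_gegD lam l) (contDiff_bivector_right γ y), hη,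
    hγ.bivector_mul_bivector_swap, hy, norm_eq_of_mem_sphere,
    real_inner_comm y (η : E)]
  linear_combination (norm := module) hode

variable [MeasurableSpace E] [BorelSpace E] {γ : E →L[ℝ] A} (hγ : IsCliffordMap γ)
include hγ

theorem IsCliffordMap.integral_sphericalDirac {F : E → A} (hF : ContDiff ℝ 1 F) :
    ∫ η : sphere (0 : E) 1, sphericalDirac γ F η ∂sphereMeasure E = 0 := by
  have : Continuous (fderiv ℝ F) := hF.continuous_fderiv one_ne_zero
  simp_rw [sphericalDirac, hγ.sum_bivector_mul]
  rw [integral_smul, integral_finsetSum _ fun i _ => integrable_sphereMeasure (by fun_prop),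
    Finset.sum_eq_zero fun i _ => ?_, smul_zero]
  rw [integral_finsetSum _ fun j _ => integrable_sphereMeasure (by fun_prop)]
  refine Finset.sum_eq_zero fun j _ => ?_
  rw [integral_const_mul_of_integrable (integrable_sphereMeasure (by fun_prop)),
    integral_fderiv_apply_skewAdjoint (rotationGenerator_mem_skewAdjoint _ _) hF, mul_zero]

variable [CompleteSpace A] {lam : ℝ} (hdim : 2 * lam + 2 = Module.finrank ℝ E) (hlam : 0 ≤ lam)
  {x y : E} (hx : ‖x‖ = 1) (hy : ‖y‖ = 1)
include hdim hlam hx hy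

theorem IsCliffordMap.integral_gegT_mul_gegD_smul_bivector (k l : ℕ) :
    ∫ η : sphere (0 : E) 1, (gegT lam k ⟪x, (η : E)⟫ * gegD lam l ⟪y, (η : E)⟫) •
        bivector γ η y ∂sphereMeasure E =
      if k = l then gegD lam k ⟪x, y⟫ • bivector γ x y else 0 := by
  let b := stdOrthonormalBasis ℝ E
  have hterm (i j) : ∫ η : sphere (0 : E) 1, (gegT lam k ⟪x, (η : E)⟫ *
      gegD lam l ⟪y, (η : E)⟫ * (2⁻¹ * ⟪y, rotationGenerator (b i) (b j) η⟫)) •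
        (γ (b i) * γ (b j)) ∂sphereMeasure E =
      (2⁻¹ * if k = l then gegD lam k ⟪x, y⟫ * ⟪y, rotationGenerator (b i) (b j) x⟫ else 0) •
        (γ (b i) * γ (b j)) := by
    rw [integral_smul_const, ← integral_gegT_mul_gegD_mul_inner_skewAdjoint hdim hlam hx hy
      (rotationGenerator_mem_skewAdjoint (b i) (b j)), ← integral_const_mul]
    simp only [mul_assoc, mul_left_comm (2⁻¹ : ℝ)]
  simp_rw [hγ.bivector_eq_sum_inner_rotationGenerator b, Finset.smul_sum, smul_smul,
    ← Fintype.sum_prod_type']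
  rw [integral_finsetSum _ fun p _ => integrable_sphereMeasure (by fun_prop)]
  simp_rw [hterm]
  split_ifs <;> simp [mul_left_comm]

theorem IsCliffordMap.integral_gegT_smul_sphericalDirac (k l : ℕ) :
    ∫ η : sphere (0 : E) 1, gegT lam k ⟪x, (η : E)⟫ •
        sphericalDirac γ (fun η => gegD lam l ⟪y, η⟫ • bivector γ y η) η ∂sphereMeasure E =
      if k = l then (2 * lam * gegD lam k ⟪x, y⟫) • bivector γ x y -
        (2 * (k + lam) * (jacobiCoeff lam k * (1 - jacobiCoeff lam k)) * gegT lam k ⟪x, y⟫) •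
          (1 : A) else 0 := by
  have hTD := hγ.integral_gegT_mul_gegD_smul_bivector hdim hlam hx hy k l
  have hTT := zonalPairing_gegT_gegT hdim hlam hx hy k l
  rw [zonalPairing] at hTT
  calc _ = ∫ η : sphere (0 : E) 1, ((2 * lam) • (gegT lam k ⟪x, (η : E)⟫ *
          gegD lam l ⟪y, (η : E)⟫) • bivector γ (η : E) y -
        (2 * (l + lam) * (jacobiCoeff lam l * (1 - jacobiCoeff lam l))) •
          (gegT lam k ⟪x, (η : E)⟫ * gegT lam l ⟪y, (η : E)⟫) • (1 : A)) ∂sphereMeasure E :=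
        integral_congr_ae (.of_forall fun η => by
          simp only [hγ.sphericalDirac_gegD_smul_bivector hdim hlam hy]
          module)
    _ = (2 * lam) • (if k = l then gegD lam k ⟪x, y⟫ • bivector γ x y else 0) -
        (2 * (l + lam) * (jacobiCoeff lam l * (1 - jacobiCoeff lam l))) •
          (if k = l then gegT lam k ⟪x, y⟫ else 0) • (1 : A) := by
        rw [integral_sub (integrable_sphereMeasure (by fun_prop))
          (integrable_sphereMeasure (by fun_prop)), integral_smul, integral_smul, hTD,
          integral_smul_const, hTT]
    _ = _ := by
        split_ifs with h
        · simp only [h, smul_smul]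
        · simp

theorem IsCliffordMap.integral_gegD_mul_gegD_smul_bivector_mul_bivector (k l : ℕ) :
    ∫ η : sphere (0 : E) 1, (gegD lam k ⟪x, (η : E)⟫ * gegD lam l ⟪y, (η : E)⟫) •
        (bivector γ (η : E) x * bivector γ y η) ∂sphereMeasure E =
      if k = l then (jacobiCoeff lam k * (1 - jacobiCoeff lam k) * gegT lam k ⟪x, y⟫) • (1 : A) -
        ((1 - 2 * jacobiCoeff lam k) * gegD lam k ⟪x, y⟫) • bivector γ x y else 0 := by
  rcases k.eq_zero_or_pos with rfl | hk
  · simp [jacobiCoeff_zero]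
  let G : E → A := fun η => gegD lam l ⟪y, η⟫ • bivector γ y η
  have hG : ContDiff ℝ 1 G :=
    ((contDiff_gegD lam l).comp (contDiff_const.inner ℝ contDiff_id)).smul
      (contDiff_bivector_right γ y)
  have hdirac := hγ.integral_sphericalDirac (F := fun η => gegT lam k ⟪x, η⟫ • G η)
    (((contDiff_gegT lam k).comp (contDiff_const.inner ℝ contDiff_id)).smul hG)
  have hleibniz (η : E) : sphericalDirac γ (fun η => gegT lam k ⟪x, η⟫ • G η) η =
      (2 * (k + lam)) • (gegD lam k ⟪x, η⟫ * gegD lam l ⟪y, η⟫) •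
        (bivector γ η x * bivector γ y η) + gegT lam k ⟪x, η⟫ • sphericalDirac γ G η := by
    rw [sphericalDirac_comp_inner_smul γ (contDiff_gegT lam k) hG, deriv_gegT, mul_smul_comm]
    module
  have hΓ : Continuous fun η : sphere (0 : E) 1 => sphericalDirac γ G η := by
    simp_rw [G, hγ.sphericalDirac_gegD_smul_bivector hdim hlam hy]
    fun_prop
  simp_rw [hleibniz] at hdirac
  rw [integral_add (integrable_sphereMeasure (by fun_prop)) (integrable_sphereMeasure
    (by fun_prop)), integral_smul, hγ.integral_gegT_smul_sphericalDirac hdim hlam hx hy] at hdirac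
  have : (0 : ℝ) < k := by exact_mod_cast hk
  refine smul_right_injective A (by positivity : 2 * (k + lam) ≠ 0) ?_
  dsimp only
  rw [eq_neg_of_add_eq_zero_left hdirac]
  split_ifs
  · have hc := congrArg (fun c : ℝ => (c * gegD lam k ⟪x, y⟫) • bivector γ x y)
      (two_mul_mul_jacobiCoeff hlam k)
    linear_combination (norm := module) (-2 : ℝ) • hc
  · simp

end Clifford

/-! ### The scalar series of the Clifford-Fourier kernel -/

section KernelSeries

/-- The coefficient of the scalar part of `kernelHarmonic`. -/
def kernelCoeff (u : ℂ) (lam : ℝ) (k : ℕ) : ℂ :=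
  (-1) ^ k - jacobiCoeff lam k * (u + (-1) ^ k)

theorem norm_add_neg_one_pow_le (u : ℂ) (k : ℕ) : ‖u + (-1) ^ k‖ ≤ ‖u‖ + 1 :=
  (norm_add_le _ _).trans_eq (by simp)

theorem summable_mul_ofReal_of_norm_le {c : ℕ → ℂ} {M : ℝ} (hc : ∀ k, ‖c k‖ ≤ M) {q p : ℕ → ℝ}
    (hp : Summable p) (hq : ∀ k, |q k| ≤ p k) : Summable fun k => c k * (q k : ℂ) := by
  refine .of_norm_bounded (hp.mul_left M) fun k => ?_
  rw [norm_mul, Complex.norm_real, Real.norm_eq_abs]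
  exact mul_le_mul (hc k) (hq k) (abs_nonneg _) ((norm_nonneg _).trans (hc k))

variable {lam : ℝ} (hlam : 0 ≤ lam)
include hlam

theorem norm_kernelCoeff_le (u : ℂ) (k : ℕ) : ‖kernelCoeff u lam k‖ ≤ ‖u‖ + 2 := by
  have hc : ‖(jacobiCoeff lam k : ℂ)‖ ≤ 1 := by
    rw [Complex.norm_real, Real.norm_eq_abs, jacobiCoeff, abs_of_nonneg (by positivity)]
    exact div_le_one_of_le₀ (by linarith [k.cast_nonneg (α := ℝ)]) (by positivity)
  calc ‖kernelCoeff u lam k‖ ≤ ‖(-1 : ℂ) ^ k‖ + ‖(jacobiCoeff lam k : ℂ) * (u + (-1) ^ k)‖ :=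
        norm_sub_le _ _
    _ ≤ 1 + 1 * (‖u‖ + 1) := by
        rw [norm_mul]
        gcongr
        · simp
        · exact norm_add_neg_one_pow_le u k
    _ = ‖u‖ + 2 := by ring

variable (z : ℝ) {w : ℝ} (hw : |w| ≤ 1)
include hw

theorem hasSum_AfunR_add_BfunR (u : ℂ) :
    HasSum (fun k => kernelCoeff u lam k * ((normBessel lam k z * gegT lam k w : ℝ) : ℂ))
      (AfunR u lam w z + BfunR u lam w z) := by
  have hsummable {c : ℕ → ℂ} {M : ℝ} (hc : ∀ k, ‖c k‖ ≤ M) :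
      Summable fun k => c k * ((normBessel lam k z * gegT lam k w : ℝ) : ℂ) :=
    summable_mul_ofReal_of_norm_le hc (summable_zonalMajorant lam z)
      (abs_normBessel_mul_gegT_le hlam z hw)
  have hpow : (2 : ℝ) ^ (lam - 1) = 2 ^ lam / 2 := Real.rpow_sub_one two_ne_zero lam
  have hA : AfunR u lam w z = ∑' k, (kernelCoeff u lam k + (u + -(-1) ^ k) / 2) *
      ((normBessel lam k z * gegT lam k w : ℝ) : ℂ) := by
    rw [AfunR, ← tsum_mul_left]
    refine tsum_congr fun k => ?_
    rw [geg_eq_mul_gegT hlam, kernelCoeff, normBessel, hpow]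
    push_cast
    ring
  have hB : BfunR u lam w z = ∑' k, -((u + -(-1) ^ k) / 2) *
      ((normBessel lam k z * gegT lam k w : ℝ) : ℂ) := by
    rw [BfunR, ← tsum_mul_left]
    refine tsum_congr fun k => ?_
    rw [normBessel, hpow]
    push_cast
    ring
  have hhalf (k : ℕ) : ‖-((u + -(-1) ^ k) / 2)‖ ≤ ‖u‖ + 1 := by
    rw [norm_neg, norm_div, Complex.norm_two]
    have := (norm_add_le u (-(-1) ^ k)).trans_eq (by simp : _ = ‖u‖ + 1)
    linarith [norm_nonneg u]
  rw [hA, hB]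
  convert (hsummable fun k => (norm_add_le _ _).trans
    (add_le_add (norm_kernelCoeff_le hlam u k) ((norm_neg _).symm.trans_le (hhalf k)))).hasSum.add
      (hsummable hhalf).hasSum using 2
  ring

theorem hasSum_mul_CfunR (u : ℂ) :
    HasSum (fun k => -(u + (-1) ^ k) * ((normBessel lam k z * gegD lam k w : ℝ) : ℂ))
      (z * CfunR u lam w z) := by
  have hC : z * CfunR u lam w z =
      ∑' k, -(u + (-1) ^ k) * ((normBessel lam k z * gegD lam k w : ℝ) : ℂ) := by
    rw [CfunR, ← mul_assoc, ← tsum_mul_left]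
    refine tsum_congr fun k => ?_
    rcases k with _ | k
    · simp
    · rw [normBessel, gegD]
      push_cast
      simp only [pow_succ]
      ring
  rw [hC]
  exact (summable_mul_ofReal_of_norm_le
    (fun k => (norm_neg _).trans_le (norm_add_neg_one_pow_le u k))
    (summable_zonalMajorant lam z) (abs_normBessel_mul_gegD_le hlam z hw)).hasSum

end KernelSeries

/-! ### The Clifford-Fourier kernel in a complex Clifford algebra -/

section CliffordKernel

open Metric
open scoped RealInnerProductSpace

variable {E : Type*} [NormedAddCommGroup E] [InnerProductSpace ℝ E]
  {A : Type*} [NormedRing A] [NormedAlgebra ℂ A]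

/-- The degree `k` component of the Clifford-Fourier kernel, as a function of the cosine `w` of the
angle between the two arguments and of their normalized bivector `B`. The parameter `u` is `i ^ m`
for the kernel and `(-i) ^ m` for its conjugate. -/
def kernelHarmonic (u : ℂ) (lam : ℝ) (k : ℕ) (w : ℝ) (B : A) : A :=
  kernelCoeff u lam k • gegT lam k w • (1 : A) - (u + (-1) ^ k) • gegD lam k w • B

@[fun_prop]
theorem continuous_kernelHarmonic {X : Type*} [TopologicalSpace X] (u : ℂ) (lam : ℝ) (k : ℕ)
    {w : X → ℝ} {B : X → A} (hw : Continuous w) (hB : Continuous B) :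
    Continuous fun a => kernelHarmonic u lam k (w a) (B a) := by
  unfold kernelHarmonic
  fun_prop

theorem kernelHarmonic_mul_kernelHarmonic (u v : ℂ) (lam : ℝ) (k l : ℕ) (s t : ℝ) (B C : A) :
    kernelHarmonic u lam k s B * kernelHarmonic v lam l t C =
      (kernelCoeff u lam k * kernelCoeff v lam l) • (gegT lam k s * gegT lam l t) • (1 : A) -
        (kernelCoeff u lam k * (v + (-1) ^ l)) • (gegT lam k s * gegD lam l t) • C -
        ((u + (-1) ^ k) * kernelCoeff v lam l) • (gegT lam l t * gegD lam k s) • B +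
        ((u + (-1) ^ k) * (v + (-1) ^ l)) • (gegD lam k s * gegD lam l t) • (B * C) := by
  simp only [kernelHarmonic, sub_mul, mul_sub, smul_mul_assoc, mul_smul_comm, one_mul, mul_one]
  module

theorem kernelCoeff_mul_kernelCoeff_add {u v : ℂ} (huv : u * v = 1) (lam : ℝ) (k : ℕ) :
    kernelCoeff u lam k * kernelCoeff v lam k +
      (u + (-1) ^ k) * (v + (-1) ^ k) * (jacobiCoeff lam k * (1 - jacobiCoeff lam k)) = 1 := by
  have hε : ((-1 : ℂ) ^ k) ^ 2 = 1 := by rw [← pow_mul, mul_comm, pow_mul]; simp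
  rw [kernelCoeff, kernelCoeff]
  linear_combination (1 - jacobiCoeff lam k : ℂ) * hε + jacobiCoeff lam k * huv

theorem kernelCoeff_mul_add_mul_kernelCoeff {u v : ℂ} (huv : u * v = 1) (lam : ℝ) (k : ℕ) :
    kernelCoeff u lam k * (v + (-1) ^ k) + (u + (-1) ^ k) * kernelCoeff v lam k =
      (u + (-1) ^ k) * (v + (-1) ^ k) * (1 - 2 * jacobiCoeff lam k) := by
  have hε : ((-1 : ℂ) ^ k) ^ 2 = 1 := by rw [← pow_mul, mul_comm, pow_mul]; simp
  rw [kernelCoeff, kernelCoeff]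
  linear_combination hε - huv

/-- The Clifford-Fourier kernel as a function of the product `z` of the norms of its arguments, of
the cosine `w` of the angle between them, and of their normalized bivector `B`. -/
def cliffordKernel (u : ℂ) (lam w z : ℝ) (B : A) : A :=
  (AfunR u lam w z + BfunR u lam w z) • (1 : A) + (z * CfunR u lam w z) • B

theorem hasSum_cliffordKernel (u : ℂ) {lam : ℝ} (hlam : 0 ≤ lam) (z : ℝ) {w : ℝ} (hw : |w| ≤ 1)
    (B : A) : HasSum (fun k => normBessel lam k z • kernelHarmonic u lam k w B)
      (cliffordKernel u lam w z B) := by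
  unfold cliffordKernel
  convert ((hasSum_AfunR_add_BfunR hlam z hw u).smul_const (1 : A)).add
    ((hasSum_mul_CfunR hlam z hw u).smul_const B) using 2 with k
  rw [kernelHarmonic]
  module

theorem norm_normBessel_smul_kernelHarmonic_le (u : ℂ) {lam : ℝ} (hlam : 0 ≤ lam) (z : ℝ) {w : ℝ}
    (hw : |w| ≤ 1) {B : A} {M : ℝ} (hB : ‖B‖ ≤ M) (k : ℕ) :
    ‖normBessel lam k z • kernelHarmonic u lam k w B‖ ≤
      ((‖u‖ + 2) * ‖(1 : A)‖ + (‖u‖ + 1) * M) * zonalMajorant lam z k := by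
  have hscalar : ‖(normBessel lam k z * gegT lam k w) • kernelCoeff u lam k • (1 : A)‖ ≤
      zonalMajorant lam z k * ((‖u‖ + 2) * ‖(1 : A)‖) := by
    rw [norm_smul, norm_smul]
    gcongr
    · exact (abs_nonneg _).trans (abs_normBessel_mul_gegT_le hlam z hw k)
    · exact abs_normBessel_mul_gegT_le hlam z hw k
    · exact norm_kernelCoeff_le hlam u k
  have hbivector : ‖(normBessel lam k z * gegD lam k w) • (u + (-1) ^ k) • B‖ ≤
      zonalMajorant lam z k * ((‖u‖ + 1) * M) := by
    rw [norm_smul, norm_smul]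
    gcongr
    · exact (abs_nonneg _).trans (abs_normBessel_mul_gegT_le hlam z hw k)
    · exact abs_normBessel_mul_gegD_le hlam z hw k
    · exact norm_add_neg_one_pow_le u k
  calc ‖normBessel lam k z • kernelHarmonic u lam k w B‖
      = ‖(normBessel lam k z * gegT lam k w) • kernelCoeff u lam k • (1 : A) -
          (normBessel lam k z * gegD lam k w) • (u + (-1) ^ k) • B‖ := by
        rw [kernelHarmonic]
        congr 1
        module
    _ ≤ zonalMajorant lam z k * ((‖u‖ + 2) * ‖(1 : A)‖) +
          zonalMajorant lam z k * ((‖u‖ + 1) * M) :=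
        (norm_sub_le _ _).trans (add_le_add hscalar hbivector)
    _ = _ := by ring

theorem norm_bivector_le (γ : E →L[ℝ] A) (x y : E) :
    ‖bivector γ x y‖ ≤ (‖γ‖ ^ 2 + ‖(1 : A)‖) * (‖x‖ * ‖y‖) :=
  calc ‖bivector γ x y‖ ≤ ‖γ x‖ * ‖γ y‖ + |⟪x, y⟫| * ‖(1 : A)‖ :=
        (norm_add_le _ _).trans (add_le_add (norm_mul_le _ _) (norm_smul_le _ _))
    _ ≤ (‖γ‖ * ‖x‖) * (‖γ‖ * ‖y‖) + (‖x‖ * ‖y‖) * ‖(1 : A)‖ := by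
        gcongr
        exacts [γ.le_opNorm x, γ.le_opNorm y, abs_real_inner_le_norm x y]
    _ = _ := by ring

variable [FiniteDimensional ℝ E] [MeasurableSpace E] [BorelSpace E] [CompleteSpace A]
  {γ : E →L[ℝ] A} (hγ : IsCliffordMap γ) {lam : ℝ} (hdim : 2 * lam + 2 = Module.finrank ℝ E)
  (hlam : 0 ≤ lam) {x y : E} (hx : ‖x‖ = 1) (hy : ‖y‖ = 1) {u v : ℂ} (huv : u * v = 1)
include hγ hdim hlam hx hy huv

theorem integral_kernelHarmonic_mul_kernelHarmonic (k l : ℕ) :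
    ∫ η : sphere (0 : E) 1, kernelHarmonic u lam k ⟪x, (η : E)⟫ (bivector γ η x) *
        kernelHarmonic v lam l ⟪y, (η : E)⟫ (bivector γ y η) ∂sphereMeasure E =
      if k = l then gegT lam k ⟪x, y⟫ • (1 : A) else 0 := by
  have hTD : ∫ η : sphere (0 : E) 1, (gegT lam k ⟪x, (η : E)⟫ * gegD lam l ⟪y, (η : E)⟫) •
      bivector γ y η ∂sphereMeasure E =
        -(if k = l then gegD lam k ⟪x, y⟫ • bivector γ x y else 0) := by
    simp_rw [hγ.bivector_swap _ y, smul_neg]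
    rw [integral_neg, hγ.integral_gegT_mul_gegD_smul_bivector hdim hlam hx hy]
  simp_rw [kernelHarmonic_mul_kernelHarmonic]
  rw [integral_add (integrable_sphereMeasure (by fun_prop)) (integrable_sphereMeasure
    (by fun_prop)), integral_sub (integrable_sphereMeasure (by fun_prop)) (integrable_sphereMeasure
    (by fun_prop)), integral_sub (integrable_sphereMeasure (by fun_prop)) (integrable_sphereMeasure
    (by fun_prop)), integral_smul, integral_smul, integral_smul, integral_smul,
    integral_smul_const, ← zonalPairing,
    zonalPairing_gegT_gegT hdim hlam hx hy, hTD,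
    hγ.integral_gegT_mul_gegD_smul_bivector hdim hlam hy hx,
    hγ.integral_gegD_mul_gegD_smul_bivector_mul_bivector hdim hlam hx hy]
  rcases eq_or_ne k l with rfl | hkl
  · rw [if_pos rfl, if_pos rfl, if_pos rfl, if_pos rfl, if_pos rfl, hγ.bivector_swap x y,
      real_inner_comm x y]
    linear_combination (norm := module) congrArg (· • gegT lam k ⟪x, y⟫ • (1 : A))
      (kernelCoeff_mul_kernelCoeff_add huv lam k) +
      congrArg (· • gegD lam k ⟪x, y⟫ • bivector γ x y)
      (kernelCoeff_mul_add_mul_kernelCoeff huv lam k)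
  · simp [hkl, hkl.symm]

theorem integral_cliffordKernel_mul_cliffordKernel (a b : ℝ) :
    ∫ η : sphere (0 : E) 1, cliffordKernel u lam ⟪x, (η : E)⟫ a (bivector γ η x) *
        cliffordKernel v lam ⟪y, (η : E)⟫ b (bivector γ y η) ∂sphereMeasure E =
      normBessel lam 0 ‖a • x - b • y‖ • (1 : A) := by
  have hbound (x : E) (hx : ‖x‖ = 1) (η : sphere (0 : E) 1) :
      ‖bivector γ η x‖ ≤ ‖γ‖ ^ 2 + ‖(1 : A)‖ ∧ ‖bivector γ x η‖ ≤ ‖γ‖ ^ 2 + ‖(1 : A)‖ := by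
    constructor <;> refine (norm_bivector_le γ _ _).trans_eq ?_ <;> simp [hx]
  have hsum := hasSum_integral_of_biorthogonal (μ := sphereMeasure E) (ContinuousLinearMap.mul ℝ A)
    (fun k => (integrable_sphereMeasure (by fun_prop)).aestronglyMeasurable)
    (fun k η => norm_normBessel_smul_kernelHarmonic_le u hlam a (abs_inner_coe_sphere_le hx η)
      (hbound x hx η).1 k) ((summable_zonalMajorant lam a).mul_left _)
    (fun η => hasSum_cliffordKernel u hlam a (abs_inner_coe_sphere_le hx η) _)
    (fun k => (integrable_sphereMeasure (by fun_prop)).aestronglyMeasurable)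
    (fun k η => norm_normBessel_smul_kernelHarmonic_le v hlam b (abs_inner_coe_sphere_le hy η)
      (hbound y hy η).2 k) ((summable_zonalMajorant lam b).mul_left _)
    (fun η => hasSum_cliffordKernel v hlam b (abs_inner_coe_sphere_le hy η) _)
    (c := fun k => (normBessel lam k a * normBessel lam k b * gegT lam k ⟪x, y⟫) • (1 : A))
    fun k l => ?_
  · exact hsum.unique ((hasSum_normBessel_addition hdim hlam hx hy a b).smul_const 1)
  · simp_rw [ContinuousLinearMap.mul_apply', smul_mul_smul_comm]
    rw [integral_smul, integral_kernelHarmonic_mul_kernelHarmonic hγ hdim hlam hx hy huv]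
    split_ifs with hkl
    · rw [hkl, smul_smul]
    · rw [smul_zero]

end CliffordKernel

/-! ### The algebra `Cl m` -/

section Multiplication

/-- The sign of `e_T * e_U` relative to `e_{T Δ U}`. It is multiplicative in both arguments for the
symmetric difference, which is what makes the multiplication of `Cl m` associative. -/
def basisSign (T U : Finset (Fin m)) : ℂ :=
  ∏ t ∈ T, ∏ u ∈ U, if u ≤ t then -1 else 1

theorem neg_one_pow_eq_basisSign (T U : Finset (Fin m)) :
    (-1 : ℂ) ^ (((T ×ˢ U).filter fun p : Fin m × Fin m => p.2 < p.1).card + (T ∩ U).card) =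
      basisSign T U := by
  have hdiag : (T ×ˢ U).filter (fun p : Fin m × Fin m => p.2 = p.1) = (T ∩ U).diag := by
    ext ⟨t, u⟩
    simp only [Finset.mem_filter, Finset.mem_product, Finset.mem_diag, Finset.mem_inter]
    grind
  have hcard : ((T ×ˢ U).filter fun p : Fin m × Fin m => p.2 ≤ p.1).card =
      ((T ×ˢ U).filter fun p : Fin m × Fin m => p.2 < p.1).card + (T ∩ U).card := by
    simp_rw [le_iff_lt_or_eq, Finset.filter_or]
    rw [Finset.card_union_of_disjoint (Finset.disjoint_filter.2 fun p _ h => h.ne), hdiag,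
      Finset.diag_card]
  rw [basisSign, ← Finset.prod_product' T U fun t u => if u ≤ t then (-1 : ℂ) else 1,
    ← Finset.prod_filter, Finset.prod_const, hcard]

theorem prod_symmDiff_of_mul_self {ι M : Type*} [DecidableEq ι] [CommMonoid M] {f : ι → M}
    (hf : ∀ i, f i * f i = 1) (S T : Finset ι) :
    ∏ i ∈ symmDiff S T, f i = (∏ i ∈ S, f i) * ∏ i ∈ T, f i := by
  have hinter : (∏ i ∈ S ∩ T, f i) * ∏ i ∈ S ∩ T, f i = 1 := by
    rw [← Finset.prod_mul_distrib]
    exact Finset.prod_eq_one fun i _ => hf i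
  calc ∏ i ∈ symmDiff S T, f i = (∏ i ∈ S \ T, f i) * ∏ i ∈ T \ S, f i :=
        Finset.prod_union disjoint_sdiff_sdiff
    _ = (∏ i ∈ S ∩ T, f i) * (∏ i ∈ S ∩ T, f i) * ((∏ i ∈ S \ T, f i) * ∏ i ∈ T \ S, f i) := by
        rw [hinter, one_mul]
    _ = (∏ i ∈ S, f i) * ∏ i ∈ T, f i := by
        rw [mul_mul_mul_comm, Finset.prod_inter_mul_prod_sdiff, Finset.inter_comm,
          Finset.prod_inter_mul_prod_sdiff]

theorem prod_neg_one_mul_self (t : Fin m) (U : Finset (Fin m)) :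
    (∏ u ∈ U, if u ≤ t then (-1 : ℂ) else 1) * ∏ u ∈ U, (if u ≤ t then -1 else 1) = 1 := by
  rw [← Finset.prod_mul_distrib]
  exact Finset.prod_eq_one fun u _ => by split_ifs <;> norm_num

theorem basisSign_mul_self (T U : Finset (Fin m)) : basisSign T U * basisSign T U = 1 := by
  rw [basisSign, ← Finset.prod_mul_distrib]
  exact Finset.prod_eq_one fun t _ => prod_neg_one_mul_self t U

theorem basisSign_symmDiff_left (S T U : Finset (Fin m)) :
    basisSign (symmDiff S T) U = basisSign S U * basisSign T U :=
  prod_symmDiff_of_mul_self (fun t => prod_neg_one_mul_self t U) S T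

theorem basisSign_symmDiff_right (S T U : Finset (Fin m)) :
    basisSign S (symmDiff T U) = basisSign S T * basisSign S U := by
  rw [basisSign, basisSign, basisSign, ← Finset.prod_mul_distrib]
  exact Finset.prod_congr rfl fun t _ =>
    prod_symmDiff_of_mul_self (fun u => by split_ifs <;> norm_num) T U

@[simp]
theorem coeff_add (a b : Cl m) (S : Finset (Fin m)) : coeff (a + b) S = coeff a S + coeff b S :=
  rfl

@[simp]
theorem coeff_smul (c : ℂ) (a : Cl m) (S : Finset (Fin m)) : coeff (c • a) S = c * coeff a S :=
  rfl

theorem coeff_one (S : Finset (Fin m)) : coeff (1 : Cl m) S = if S = ∅ then 1 else 0 :=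
  rfl

theorem coeff_e (i : Fin m) (S : Finset (Fin m)) : coeff (e m i) S = if S = {i} then 1 else 0 :=
  rfl

theorem coeff_mul (a b : Cl m) (S : Finset (Fin m)) :
    coeff (a * b) S = ∑ T, basisSign T (symmDiff T S) * coeff a T * coeff b (symmDiff T S) := by
  simp only [← neg_one_pow_eq_basisSign]
  rfl

protected theorem Cl.ext {a b : Cl m} (h : ∀ S, coeff a S = coeff b S) : a = b :=
  funext h

protected theorem Cl.mul_assoc (a b c : Cl m) : a * b * c = a * (b * c) := by
  refine Cl.ext fun S => ?_
  simp only [coeff_mul, Finset.mul_sum, Finset.sum_mul]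
  rw [Finset.sum_comm]
  refine Finset.sum_congr rfl fun U _ =>
    Fintype.sum_equiv (symmDiff_right_involutive U).toPerm _ _ fun T => ?_
  have hSU : symmDiff (symmDiff U T) (symmDiff U S) = symmDiff T S := by
    rw [symmDiff_comm U T, symmDiff_assoc, symmDiff_symmDiff_cancel_left]
  have hsign : basisSign T (symmDiff T S) * basisSign U (symmDiff U T) =
      basisSign U (symmDiff U S) * basisSign (symmDiff U T) (symmDiff T S) := by
    simp only [basisSign_symmDiff_left, basisSign_symmDiff_right]
    linear_combination (-basisSign T T * basisSign T S * basisSign U U * basisSign U T) *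
      basisSign_mul_self U S
  rw [Function.Involutive.coe_toPerm, hSU]
  linear_combination (coeff a U * coeff b (symmDiff U T) * coeff c (symmDiff T S)) * hsign

protected theorem Cl.one_mul (a : Cl m) : 1 * a = a := by
  refine Cl.ext fun S => ?_
  rw [coeff_mul, Finset.sum_eq_single ∅ (fun T _ hT => by simp [coeff_one, hT]) (by simp)]
  have hS : symmDiff ∅ S = S := bot_symmDiff S
  simp [coeff_one, basisSign, hS]

protected theorem Cl.mul_one (a : Cl m) : a * 1 = a := by
  refine Cl.ext fun S => ?_
  rw [coeff_mul, Finset.sum_eq_single S _ (by simp)]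
  · simp [coeff_one, basisSign]
  · intro T _ hT
    rw [coeff_one, if_neg (by simpa [← Finset.bot_eq_empty] using hT), mul_zero]

protected theorem Cl.add_mul (a b c : Cl m) : (a + b) * c = a * c + b * c :=
  Cl.ext fun S => by simp only [coeff_add, coeff_mul, mul_add, add_mul, Finset.sum_add_distrib]

protected theorem Cl.mul_add (a b c : Cl m) : a * (b + c) = a * b + a * c :=
  Cl.ext fun S => by simp only [coeff_add, coeff_mul, mul_add, Finset.sum_add_distrib]

protected theorem Cl.smul_mul (r : ℂ) (a b : Cl m) : (r • a) * b = r • (a * b) :=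
  Cl.ext fun S => by
    simp only [coeff_smul, coeff_mul, Finset.mul_sum, mul_assoc, mul_left_comm r]

protected theorem Cl.mul_smul (r : ℂ) (a b : Cl m) : a * (r • b) = r • (a * b) :=
  Cl.ext fun S => by
    simp only [coeff_smul, coeff_mul, Finset.mul_sum, mul_left_comm r]

theorem coeff_e_mul_e (i j : Fin m) (S : Finset (Fin m)) :
    coeff (e m i * e m j) S =
      if S = symmDiff {i} {j} then if j ≤ i then -1 else 1 else 0 := by
  have hS : symmDiff {i} S = {j} ↔ S = symmDiff {i} {j} :=
    (symmDiff_right_involutive {i}).eq_iff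
  rw [coeff_mul, Finset.sum_eq_single {i} (fun T _ hT => by simp [coeff_e, hT]) (by simp), coeff_e,
    coeff_e, if_pos rfl, mul_one]
  by_cases hSij : S = symmDiff {i} {j}
  · rw [hS.2 hSij, if_pos hSij]
    simp [basisSign]
  · simp [hS, hSij]

theorem e_mul_e_add_e_mul_e (i j : Fin m) :
    e m i * e m j + e m j * e m i = (if i = j then (-2 : ℂ) else 0) • (1 : Cl m) := by
  refine Cl.ext fun S => ?_
  rw [coeff_add, coeff_e_mul_e, coeff_e_mul_e, coeff_smul, coeff_one,
    symmDiff_comm ({j} : Finset (Fin m)) {i}]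
  rcases lt_trichotomy i j with hij | rfl | hij
  · rw [if_neg hij.not_ge, if_pos hij.le, if_neg hij.ne]
    split_ifs <;> norm_num
  · rw [symmDiff_self, Finset.bot_eq_empty, if_pos le_rfl, if_pos rfl]
    split_ifs <;> norm_num
  · rw [if_pos hij.le, if_neg hij.not_ge, if_neg hij.ne']
    split_ifs <;> norm_num

end Multiplication

/-! ### The left regular representation of `Cl m` -/

section MulLeft

open scoped RealInnerProductSpace

local instance : NormedSpace ℂ (Cl m) :=
  inferInstanceAs (NormedSpace ℂ (Finset (Fin m) → ℂ))

local instance : FiniteDimensional ℂ (Cl m) :=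
  inferInstanceAs (FiniteDimensional ℂ (Finset (Fin m) → ℂ))

/-- The algebra of operators on `Cl m`, as a type of its own so that its real structure is the one
restricted from the complex structure. -/
def ClOperator (m : ℕ) : Type :=
  Cl m →L[ℂ] Cl m

instance : NormedRing (ClOperator m) :=
  inferInstanceAs (NormedRing (Cl m →L[ℂ] Cl m))

instance : NormedAlgebra ℂ (ClOperator m) :=
  inferInstanceAs (NormedAlgebra ℂ (Cl m →L[ℂ] Cl m))

instance : CompleteSpace (ClOperator m) :=
  inferInstanceAs (CompleteSpace (Cl m →L[ℂ] Cl m))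

/-- The left regular representation, which realizes `Cl m` inside a Banach algebra: the norm of
`Cl m` is the supremum norm of the coefficients and is not submultiplicative. -/
def mulLeft : Cl m →ₗ[ℂ] ClOperator m :=
  LinearMap.toContinuousLinearMap.toLinearMap ∘ₗ
    LinearMap.mk₂ ℂ (· * ·) Cl.add_mul Cl.smul_mul Cl.mul_add Cl.mul_smul

theorem mulLeft_injective : Function.Injective (mulLeft : Cl m →ₗ[ℂ] ClOperator m) :=
  fun a b h => by
    rw [← Cl.mul_one a, ← Cl.mul_one b]
    exact DFunLike.congr_fun (F := Cl m →L[ℂ] Cl m) h 1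

theorem mulLeft_one : mulLeft (1 : Cl m) = 1 :=
  ContinuousLinearMap.ext Cl.one_mul

theorem mulLeft_mul (a b : Cl m) : mulLeft (a * b) = mulLeft a * mulLeft b :=
  ContinuousLinearMap.ext (Cl.mul_assoc a b)

theorem mulLeft_integral {α : Type*} [MeasurableSpace α] {μ : Measure α} (f : α → Cl m) :
    mulLeft (∫ a, f a ∂μ) = ∫ a, mulLeft (f a) ∂μ := by
  obtain ⟨K, -, hK⟩ := (mulLeft (m := m)).exists_antilipschitzWith
    (LinearMap.ker_eq_bot.2 mulLeft_injective)
  exact ((LinearMap.toContinuousLinearMap mulLeft).integral_comp_comm' hK f).symm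

/-- The Clifford map `x ↦ ∑ i, x i • e m i`, in the left regular representation. -/
def vecMap (m : ℕ) : EuclideanSpace ℝ (Fin m) →L[ℝ] ClOperator m :=
  ∑ i, (EuclideanSpace.proj i).smulRight (mulLeft (e m i))

theorem vecMap_apply (x : EuclideanSpace ℝ (Fin m)) :
    vecMap m x = ∑ i, x i • mulLeft (e m i) := by
  simp [vecMap]

theorem mulLeft_e_mul_add (i j : Fin m) :
    mulLeft (e m i) * mulLeft (e m j) + mulLeft (e m j) * mulLeft (e m i) =
      if i = j then (-2 : ℝ) • 1 else 0 := by
  rw [← mulLeft_mul, ← mulLeft_mul, ← map_add, e_mul_e_add_e_mul_e, map_smul, mulLeft_one]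
  split_ifs
  · rw [← Complex.coe_smul]; norm_num
  · rw [zero_smul]

theorem vecMap_mul_vecMap (x y : EuclideanSpace ℝ (Fin m)) :
    vecMap m x * vecMap m y = ∑ i, ∑ j, (x i * y j) • (mulLeft (e m i) * mulLeft (e m j)) := by
  simp only [vecMap_apply, Finset.sum_mul, Finset.mul_sum, smul_mul_smul_comm]
  rw [Finset.sum_comm]

theorem isCliffordMap_vecMap : IsCliffordMap (vecMap m) := fun x => by
  have hswap : vecMap m x * vecMap m x =
      ∑ i, ∑ j, (x i * x j) • (mulLeft (e m j) * mulLeft (e m i)) := by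
    rw [vecMap_mul_vecMap, Finset.sum_comm]
    simp only [mul_comm]
  have hdouble : (2 : ℝ) • (vecMap m x * vecMap m x) = -((2 * ‖x‖ ^ 2) • 1) := by
    rw [two_smul]
    nth_rewrite 2 [hswap]
    simp only [vecMap_mul_vecMap, ← Finset.sum_add_distrib, ← smul_add, mulLeft_e_mul_add, smul_ite,
      smul_zero, Finset.sum_ite_eq, Finset.mem_univ, if_true, smul_smul, ← Finset.sum_smul,
      EuclideanSpace.real_norm_sq_eq, Finset.mul_sum, ← neg_smul, ← Finset.sum_neg_distrib]
    congr! 2 with i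
    ring
  linear_combination (norm := module) (1 / 2 : ℝ) • hdouble

theorem sum_sum_eq_two_nsmul_of_symm {ι M : Type*} [Fintype ι] [LinearOrder ι] [AddCommMonoid M]
    {f : ι → ι → M} (hsymm : ∀ i j, f j i = f i j) (hdiag : ∀ i, f i i = 0) :
    ∑ i, ∑ j, f i j = 2 • ∑ i, ∑ j, if i < j then f i j else 0 := by
  have hsplit (i j : ι) : f i j = (if i < j then f i j else 0) + if j < i then f j i else 0 := by
    rcases lt_trichotomy i j with hij | rfl | hij
    · simp [hij, hij.not_gt]
    · simp [hdiag]
    · simp [hij, hij.not_gt, hsymm i j]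
  calc ∑ i, ∑ j, f i j
      = ∑ i, ∑ j, ((if i < j then f i j else 0) + if j < i then f j i else 0) :=
        Finset.sum_congr rfl fun i _ => Finset.sum_congr rfl fun j _ => hsplit i j
    _ = 2 • ∑ i, ∑ j, if i < j then f i j else 0 := by
        simp only [Finset.sum_add_distrib]
        rw [Finset.sum_comm (f := fun i j => if j < i then f j i else 0), two_nsmul]

theorem mulLeft_wedge (x y : EuclideanSpace ℝ (Fin m)) :
    mulLeft (wedge m x y) = bivector (vecMap m) x y := by
  let f (i j : Fin m) : ClOperator m :=
    (x i * y j - x j * y i) • (mulLeft (e m i) * mulLeft (e m j))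
  have hsymm (i j : Fin m) : f j i = f i j := by
    have hanti := mulLeft_e_mul_add i j
    split_ifs at hanti with hij
    · rw [hij]
    · linear_combination (norm := module) (x j * y i - x i * y j) • hanti
  have hwedge : mulLeft (wedge m x y) = ∑ i, ∑ j, if i < j then f i j else 0 := by
    simp only [wedge, map_sum, apply_ite (mulLeft : Cl m →ₗ[ℂ] _), map_smul, map_zero, mulLeft_mul]
    simp only [Complex.coe_smul, f]
  have hdouble : (2 : ℝ) • bivector (vecMap m) x y = ∑ i, ∑ j, f i j := by
    simp only [isCliffordMap_vecMap.two_smul_bivector, vecMap_mul_vecMap, f,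
      ← Finset.sum_sub_distrib, ← sub_smul, mul_comm]
  rw [sum_sum_eq_two_nsmul_of_symm hsymm fun i => by simp [f], ← hwedge, two_nsmul] at hdouble
  linear_combination (norm := module) (-1 / 2 : ℝ) • hdouble

/-! ### The Clifford-Fourier kernel in `Cl m` -/

/-- The kernel `Kminus` with an arbitrary complex number `u` in place of `I ^ m`. -/
def kernelOfParam (u : ℂ) (lam : ℝ) (x y : Fin m → ℝ) : Cl m :=
  (AfunR u lam (ip x y / (nrm x * nrm y)) (nrm x * nrm y) +
    BfunR u lam (ip x y / (nrm x * nrm y)) (nrm x * nrm y)) • (1 : Cl m) +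
  CfunR u lam (ip x y / (nrm x * nrm y)) (nrm x * nrm y) • wedge m x y

open scoped ComplexConjugate

theorem conj_AfunR (u : ℂ) (lam w z : ℝ) : conj (AfunR u lam w z) = AfunR (conj u) lam w z := by
  simp only [AfunR, map_mul, Complex.conj_ofReal, Complex.conj_tsum, map_add, map_pow, map_neg,
    map_one]

theorem conj_BfunR (u : ℂ) (lam w z : ℝ) : conj (BfunR u lam w z) = BfunR (conj u) lam w z := by
  simp only [BfunR, map_mul, Complex.conj_ofReal, Complex.conj_tsum, map_sub, map_pow, map_neg,
    map_one]

theorem conj_CfunR (u : ℂ) (lam w z : ℝ) : conj (CfunR u lam w z) = CfunR (conj u) lam w z := by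
  simp only [CfunR, map_mul, Complex.conj_ofReal, Complex.conj_tsum, map_add, map_pow, map_neg,
    map_one]

theorem cconj_add (a b : Cl m) : cconj (a + b) = cconj a + cconj b :=
  Cl.ext fun S => map_add conj (coeff a S) (coeff b S)

theorem cconj_smul (c : ℂ) (a : Cl m) : cconj (c • a) = conj c • cconj a :=
  Cl.ext fun S => map_mul conj c (coeff a S)

theorem coeff_cconj (a : Cl m) (S : Finset (Fin m)) : coeff (cconj a) S = conj (coeff a S) :=
  rfl

theorem cconj_one : cconj (1 : Cl m) = 1 :=
  Cl.ext fun S => by simp [coeff_cconj, coeff_one, apply_ite conj]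

theorem cconj_e_mul_e (i j : Fin m) : cconj (e m i * e m j) = e m i * e m j :=
  Cl.ext fun S => by simp [coeff_cconj, coeff_e_mul_e, apply_ite conj]

theorem cconj_wedge (x y : Fin m → ℝ) : cconj (wedge m x y) = wedge m x y := by
  let conjHom : Cl m →+ Cl m := AddMonoidHom.mk' cconj cconj_add
  calc cconj (wedge m x y) = conjHom (wedge m x y) := rfl
    _ = wedge m x y := by
        simp only [wedge, map_sum, apply_ite conjHom, map_zero]
        simp only [conjHom, AddMonoidHom.mk'_apply, cconj_smul, Complex.conj_ofReal, cconj_e_mul_e]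

theorem cconj_kernelOfParam (u : ℂ) (lam : ℝ) (x y : Fin m → ℝ) :
    cconj (kernelOfParam u lam x y) = kernelOfParam (conj u) lam x y := by
  simp only [kernelOfParam, cconj_add, cconj_smul, cconj_one, cconj_wedge, map_add, conj_AfunR,
    conj_BfunR, conj_CfunR]

theorem ip_eq_inner (x y : EuclideanSpace ℝ (Fin m)) : ip x y = ⟪x, y⟫ := by
  simp [ip, PiLp.inner_apply, mul_comm]

theorem norm_sub_eq_sqrt_ip (x y : EuclideanSpace ℝ (Fin m)) :
    ‖x - y‖ = √(ip x x + ip y y - 2 * ip x y) := by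
  rw [ip_eq_inner, ip_eq_inner, ip_eq_inner, real_inner_self_eq_norm_sq,
    real_inner_self_eq_norm_sq, ← Real.sqrt_sq (norm_nonneg (x - y)), norm_sub_sq_real]
  ring_nf

theorem nrm_eq_norm (x : EuclideanSpace ℝ (Fin m)) : nrm x = ‖x‖ := by
  rw [nrm, ip_eq_inner, real_inner_self_eq_norm_sq, Real.sqrt_sq (norm_nonneg x)]

theorem mulLeft_kernelOfParam_smul (u : ℂ) (lam : ℝ) {x y : EuclideanSpace ℝ (Fin m)}
    (hx : ‖x‖ = 1) (hy : ‖y‖ = 1) {a b : ℝ} (ha : 0 < a) (hb : 0 < b) :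
    mulLeft (kernelOfParam u lam (a • x).ofLp (b • y).ofLp) =
      cliffordKernel u lam ⟪x, y⟫ (a * b) (bivector (vecMap m) x y) := by
  have hcos : ⟪a • x, b • y⟫ / (a * b) = ⟪x, y⟫ := by
    rw [real_inner_smul_left, real_inner_smul_right]
    field_simp
  have hnorm : ‖a • x‖ * ‖b • y‖ = a * b := by
    rw [norm_smul_of_nonneg ha.le, norm_smul_of_nonneg hb.le, hx, hy, mul_one, mul_one]
  rw [kernelOfParam, ip_eq_inner, nrm_eq_norm, nrm_eq_norm, hnorm, hcos, map_add, map_smul,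
    map_smul, mulLeft_one, mulLeft_wedge, bivector_smul_left, bivector_smul_right, cliffordKernel]
  push_cast
  module

theorem integral_kernelOfParam_mul_kernelOfParam (hm : 2 ≤ m) {u v : ℂ} (huv : u * v = 1)
    {x y : EuclideanSpace ℝ (Fin m)} (hx : x ≠ 0) (hy : y ≠ 0) {r : ℝ} (hr : 0 < r) :
    ∫ η : Metric.sphere (0 : EuclideanSpace ℝ (Fin m)) 1,
        kernelOfParam u ((m - 2) / 2) (r • η.1).ofLp x.ofLp *
          kernelOfParam v ((m - 2) / 2) y.ofLp (r • η.1).ofLp ∂sphereMeasure _ =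
      normBessel ((m - 2) / 2) 0 (r * ‖x - y‖) • (1 : Cl m) := by
  have hlam : (0 : ℝ) ≤ (m - 2) / 2 := by
    have : (2 : ℝ) ≤ m := by exact_mod_cast hm
    linarith
  have hdim : 2 * ((m - 2 : ℝ) / 2) + 2 = Module.finrank ℝ (EuclideanSpace ℝ (Fin m)) := by
    rw [finrank_euclideanSpace_fin]
    ring
  have : NeZero m := ⟨by omega⟩
  obtain ⟨p, hp, hpx⟩ := exists_norm_eq_one_norm_smul_eq x
  obtain ⟨q, hq, hqy⟩ := exists_norm_eq_one_norm_smul_eq y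
  have hnorm : ‖(r * ‖x‖) • p - (r * ‖y‖) • q‖ = r * ‖x - y‖ := by
    rw [mul_smul, mul_smul, hpx, hqy, ← smul_sub, norm_smul_of_nonneg hr.le]
  have hkernel (η : Metric.sphere (0 : EuclideanSpace ℝ (Fin m)) 1) :
      mulLeft (kernelOfParam u ((m - 2) / 2) (r • η.1).ofLp x.ofLp *
          kernelOfParam v ((m - 2) / 2) y.ofLp (r • η.1).ofLp) =
        cliffordKernel u ((m - 2) / 2) ⟪p, η.1⟫ (r * ‖x‖) (bivector (vecMap m) η p) *
          cliffordKernel v ((m - 2) / 2) ⟪q, η.1⟫ (r * ‖y‖) (bivector (vecMap m) q η) := by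
    have hη : ‖η.1‖ = 1 := norm_eq_of_mem_sphere η
    have hleft := mulLeft_kernelOfParam_smul u ((m - 2) / 2) hη hp hr (norm_pos_iff.2 hx)
    have hright := mulLeft_kernelOfParam_smul v ((m - 2) / 2) hq hη (norm_pos_iff.2 hy) hr
    rw [hpx, real_inner_comm] at hleft
    rw [hqy, mul_comm] at hright
    rw [mulLeft_mul, hleft, hright]
  apply mulLeft_injective
  rw [mulLeft_integral]
  simp_rw [hkernel]
  rw [integral_cliffordKernel_mul_cliffordKernel isCliffordMap_vecMap hdim hlam hp hq huv, hnorm,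
    ← Complex.coe_smul, ← mulLeft_one, ← map_smul]
  exact congrArg _ (Complex.coe_smul _ _)

end MulLeft

/-- The key reproducing identity: for all `x, y ≠ 0` and `r > 0`,
`∫_{S^{m-1}} conj(K_-(rη, x)) K_-(y, rη) dω(η) = 2^λ Γ(λ+1) u^{-λ} J_λ(u)`
with `u = r√(|x|² + |y|² - 2⟨x,y⟩) = r|x-y|`, where `ω` is the rotation-invariant
probability measure on the unit sphere (the normalized surface measure), and
`u^{-λ}J_λ(u)` is the entire function `J̃_λ(u)`. -/
theorem sphere_integral_kernel_kernel (m : ℕ) (hm : 2 ≤ m)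
    (x y : Fin m → ℝ) (hx : x ≠ 0) (hy : y ≠ 0) (r : ℝ) (hr : 0 < r)
    (u : ℝ) (hu : u = r * Real.sqrt (ip x x + ip y y - 2 * ip x y)) :
    (∫ η : Metric.sphere (0 : EuclideanSpace ℝ (Fin m)) 1,
        cconj (Kminus m (fun i => r * (η : EuclideanSpace ℝ (Fin m)) i) x)
          * Kminus m y (fun i => r * (η : EuclideanSpace ℝ (Fin m)) i)
      ∂(((volume : Measure (EuclideanSpace ℝ (Fin m))).toSphere Set.univ)⁻¹ •
          (volume : Measure (EuclideanSpace ℝ (Fin m))).toSphere))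
      = (((2:ℝ) ^ (((m:ℝ) - 2)/2) * Real.Gamma (((m:ℝ) - 2)/2 + 1)
          * besselJt (((m:ℝ) - 2)/2) u : ℝ)) • (1 : Cl m) := by
  have hunit : (starRingEnd ℂ) (Complex.I ^ m) * Complex.I ^ m = 1 := by
    rw [map_pow, ← mul_pow, Complex.conj_I, neg_mul, Complex.I_mul_I, neg_neg, one_pow]
  have hX : WithLp.toLp 2 x ≠ 0 := (WithLp.toLp_eq_zero 2).not.2 hx
  have hY : WithLp.toLp 2 y ≠ 0 := (WithLp.toLp_eq_zero 2).not.2 hy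
  have hKminus : Kminus m = kernelOfParam (Complex.I ^ m) ((m - 2) / 2) := rfl
  have hBessel : normBessel ((m - 2) / 2) 0 (r * ‖WithLp.toLp 2 x - WithLp.toLp 2 y‖) =
      2 ^ (((m : ℝ) - 2) / 2) * Real.Gamma ((m - 2) / 2 + 1) * besselJt ((m - 2) / 2) u := by
    rw [norm_sub_eq_sqrt_ip, ← hu]
    simp [normBessel]
  simp only [hKminus, cconj_kernelOfParam, ← hBessel]
  exact integral_kernelOfParam_mul_kernelOfParam hm hunit hX hY hr

end CliffordFourier
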